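/- arXiv:1203.1158 — 4 statements merged into one kernel-verified Lean document; each statement's English description precedes it below -/
import Mathlib

section
/- For every haircomb T on n vertices, h(T) ≥ √n/2 − 1. (The paper states h(T) ≥ √n/2 with floors and ceilings omitted.) -/
open Finset

/-- The multiset of pairwise distances between distinct vertices of `S` in `G`
(one entry for each unordered pair of distinct vertices of `S`). -/
noncomputable def distMultiset {V : Type*} (G : SimpleGraph V) (S : Finset V) : Multiset ℕ :=
  letI := Classical.decEq V
  (S.sym2.filter fun p => ¬ p.IsDiag).val.map
    (Sym2.lift ⟨fun a b => G.dist a b, fun _ _ => SimpleGraph.dist_comm⟩)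

/-- Two disjoint vertex sets are homometric if their distance multisets coincide. -/
def Homometric {V : Type*} (G : SimpleGraph V) (S₁ S₂ : Finset V) : Prop :=
  Disjoint S₁ S₂ ∧ distMultiset G S₁ = distMultiset G S₂

/-- `h(G)`: the largest `h` such that `G` contains two disjoint homometric sets of
size `h` each. -/
noncomputable def homNumber {V : Type*} (G : SimpleGraph V) : ℕ :=
  sSup {h : ℕ | ∃ S₁ S₂ : Finset V, Homometric G S₁ S₂ ∧ S₁.card = h ∧ S₂.card = h}

/-- A haircomb: a tree containing a path (the spine) such that every vertex not on the
spine has degree at most `2`.  (Equivalently, a tree obtained from a spine path and a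
collection of vertex-disjoint paths (legs) by joining, for each leg, one of its
endpoints to a spine vertex by an edge: the components of `T` minus the spine are
exactly the legs, each is a path since all its vertex degrees are at most `2`, and in a
tree it is attached to the spine by exactly one edge, necessarily at an endpoint.) -/
def IsHaircomb {V : Type*} [Fintype V] (G : SimpleGraph V) [DecidableRel G.Adj] : Prop :=
  G.IsTree ∧ ∃ (a b : V) (p : G.Walk a b), p.IsPath ∧
    ∀ v, v ∉ p.support → G.degree v ≤ 2

/-- A distance preserving injection sends a set to a set with the same distance multiset. -/
lemma distMultiset_image {V : Type*} [DecidableEq V] (G : SimpleGraph V) (S : Finset V) (φ : V → V)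
    (hinj : Set.InjOn φ S) (hd : ∀ u ∈ S, ∀ v ∈ S, G.dist (φ u) (φ v) = G.dist u v) :
    distMultiset G S = distMultiset G (S.image φ) := by
  classical
  unfold distMultiset
  refine Multiset.map_eq_map_of_bij_of_nodup _ _ (Finset.nodup _) (Finset.nodup _)
    (fun p _ => p.map φ) ?_ ?_ ?_ ?_
  · intro p
    induction p using Sym2.ind with
    | _ x y =>
      simp only [Finset.mem_val, Finset.mem_filter, Finset.mk_mem_sym2_iff, Sym2.map_mk,
        Sym2.mk_isDiag_iff, Finset.mem_image]
      rintro ⟨⟨hx, hy⟩, hxy⟩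
      exact ⟨⟨⟨x, hx, rfl⟩, ⟨y, hy, rfl⟩⟩, fun h => hxy (hinj hx hy h)⟩
  · intro p hp q hq
    induction p using Sym2.ind with
    | _ x y =>
      induction q using Sym2.ind with
      | _ z w =>
        simp only [Finset.mem_val, Finset.mem_filter, Finset.mk_mem_sym2_iff] at hp hq
        obtain ⟨⟨hx, hy⟩, -⟩ := hp
        obtain ⟨⟨hz, hw⟩, -⟩ := hq
        simp only [Sym2.map_mk, Sym2.eq_iff]
        rintro (⟨h1, h2⟩ | ⟨h1, h2⟩)
        · exact Or.inl ⟨hinj hx hz h1, hinj hy hw h2⟩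
        · exact Or.inr ⟨hinj hx hw h1, hinj hy hz h2⟩
  · intro p
    induction p using Sym2.ind with
    | _ x y =>
      simp only [Finset.mem_val, Finset.mem_filter, Finset.mk_mem_sym2_iff,
        Sym2.mk_isDiag_iff, Finset.mem_image]
      rintro ⟨⟨⟨x', hx, rfl⟩, ⟨y', hy, rfl⟩⟩, hxy⟩
      refine ⟨s(x', y'), ?_, by simp⟩
      simp only [Finset.mk_mem_sym2_iff, Sym2.mk_isDiag_iff]
      exact ⟨⟨hx, hy⟩, fun h => hxy (by rw [h])⟩
  · intro p hp
    induction p using Sym2.ind with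
    | _ x y =>
      simp only [Finset.mem_val, Finset.mem_filter, Finset.mk_mem_sym2_iff] at hp
      simp [hd x hp.1.1 y hp.1.2]

lemma le_homNumber {V : Type*} [Fintype V] [DecidableEq V] (G : SimpleGraph V) (S : Finset V)
    (φ : V → V) (hinj : Set.InjOn φ S)
    (hd : ∀ u ∈ S, ∀ v ∈ S, G.dist (φ u) (φ v) = G.dist u v)
    (hdisj : ∀ u ∈ S, φ u ∉ S) : S.card ≤ homNumber G := by
  unfold homNumber
  refine le_csSup ⟨Fintype.card V, ?_⟩ ⟨S, S.image φ, ⟨?_, distMultiset_image G S φ hinj hd⟩, rfl,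
    Finset.card_image_of_injOn hinj⟩
  · rintro h ⟨S₁, S₂, -, rfl, -⟩
    exact Finset.card_le_univ _
  · rw [Finset.disjoint_right]
    intro v hv
    obtain ⟨u, hu, rfl⟩ := Finset.mem_image.1 hv
    exact hdisj u hu

/-- A weak endomorphism does not increase distances. -/
lemma dist_le_of_weak {V : Type*} (G : SimpleGraph V) (hG : G.Connected) (Φ : V → V)
    (hΦ : ∀ u v, G.Adj u v → Φ u = Φ v ∨ G.Adj (Φ u) (Φ v)) (u v : V) :
    G.dist (Φ u) (Φ v) ≤ G.dist u v := by
  obtain ⟨w, hw⟩ := hG.exists_walk_length_eq_dist u v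
  rw [← hw]
  clear hw
  induction w with
  | nil => simp
  | @cons x y z h p ih =>
    have h1 : G.dist (Φ x) (Φ y) ≤ 1 := by
      rcases hΦ x y h with h | h
      · simp [h]
      · exact (SimpleGraph.dist_eq_one_iff_adj.2 h).le
    have := hG.dist_triangle (u := Φ x) (v := Φ y) (w := Φ z)
    simp only [SimpleGraph.Walk.length_cons]
    omega

lemma le_homNumber_of_weak {V : Type*} [Fintype V] [DecidableEq V] (G : SimpleGraph V)
    (hG : G.Connected) (Φ : V → V)
    (hΦ : ∀ u v, G.Adj u v → Φ u = Φ v ∨ G.Adj (Φ u) (Φ v)) (S : Finset V)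
    (hinv : ∀ u ∈ S, Φ (Φ u) = u) (hdisj : ∀ u ∈ S, Φ u ∉ S) : S.card ≤ homNumber G := by
  refine le_homNumber G S Φ ?_ ?_ hdisj
  · intro u hu v hv h
    rw [← hinv u hu, ← hinv v hv, h]
  · intro u hu v hv
    refine le_antisymm (dist_le_of_weak G hG Φ hΦ u v) ?_
    have := dist_le_of_weak G hG Φ hΦ (Φ u) (Φ v)
    rwa [hinv u hu, hinv v hv] at this

lemma dist_getVert_le {V : Type*} (G : SimpleGraph V) (hG : G.Connected) {u v : V}
    (w : G.Walk u v) (i j : ℕ) : G.dist (w.getVert i) (w.getVert (i + j)) ≤ j := by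
  induction j with
  | zero => simp
  | succ j ih =>
    have h1 : G.dist (w.getVert (i + j)) (w.getVert (i + j + 1)) ≤ 1 := by
      by_cases h : i + j < w.length
      · exact (SimpleGraph.dist_eq_one_iff_adj.2 (w.adj_getVert_succ h)).le
      · rw [w.getVert_of_length_le (by omega), w.getVert_of_length_le (by omega)]
        simp
    have := hG.dist_triangle (u := w.getVert i) (v := w.getVert (i + j))
      (w := w.getVert (i + j + 1))
    rw [← add_assoc]
    omega

lemma dist_getVert_eq {V : Type*} (G : SimpleGraph V) (hG : G.Connected) {u v : V}
    (w : G.Walk u v) (hw : w.length = G.dist u v) (i j : ℕ) (hij : i + j ≤ w.length) :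
    G.dist (w.getVert i) (w.getVert (i + j)) = j := by
  refine le_antisymm (dist_getVert_le G hG w i j) ?_
  have h1 := dist_getVert_le G hG w 0 i
  have h2 := dist_getVert_le G hG w (i + j) (w.length - (i + j))
  rw [Nat.add_sub_cancel' hij, w.getVert_length] at h2
  rw [zero_add, w.getVert_zero] at h1
  have h3 := hG.dist_triangle (u := u) (v := w.getVert i) (w := v)
  have h4 := hG.dist_triangle (u := w.getVert i) (v := w.getVert (i + j)) (w := v)
  omega

lemma dist_le_two_homNumber {V : Type*} [Fintype V] (G : SimpleGraph V)
    (hG : G.Connected) (u v : V) : G.dist u v ≤ 2 * homNumber G := by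
  classical
  by_contra hlt
  push Not at hlt
  obtain ⟨w, hw⟩ := hG.exists_walk_length_eq_dist u v
  set k := homNumber G + 1 with hk
  have hlen : 2 * k ≤ w.length + 1 := by omega
  have hdist : ∀ i j, i ≤ w.length → j ≤ w.length →
      G.dist (w.getVert i) (w.getVert j) = (i - j) + (j - i) := by
    intro i j hi hj
    rcases le_total i j with h | h
    · obtain ⟨d, rfl⟩ := Nat.exists_eq_add_of_le h
      rw [dist_getVert_eq G hG w hw i d hj]
      omega
    · obtain ⟨d, rfl⟩ := Nat.exists_eq_add_of_le h
      rw [SimpleGraph.dist_comm, dist_getVert_eq G hG w hw j d hi]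
      omega
  have hself : ∀ i ≤ w.length, G.dist u (w.getVert i) = i := by
    intro i hi
    have := hdist 0 i (by omega) hi
    rw [w.getVert_zero] at this
    omega
  have hS : ∀ x ∈ (Finset.range k).image w.getVert, ∃ i < k, x = w.getVert i := by
    intro x hx
    obtain ⟨i, hi, rfl⟩ := Finset.mem_image.1 hx
    exact ⟨i, Finset.mem_range.1 hi, rfl⟩
  have key := le_homNumber G ((Finset.range k).image w.getVert)
    (fun x => w.getVert (G.dist u x + k)) ?_ ?_ ?_
  · rw [Finset.card_image_of_injOn, Finset.card_range] at key
    · omega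
    · intro i hi j hj h
      have hi := Finset.mem_range.1 hi
      have hj := Finset.mem_range.1 hj
      have h1 := hself i (by omega)
      have h2 := hself j (by omega)
      have h : w.getVert i = w.getVert j := h
      rw [h] at h1
      omega
  · intro x hx y hy h
    obtain ⟨i, hi, rfl⟩ := hS x hx
    obtain ⟨j, hj, rfl⟩ := hS y hy
    simp only [hself i (by omega), hself j (by omega)] at h
    have h1 := hself (i + k) (by omega)
    have h2 := hself (j + k) (by omega)
    rw [h] at h1
    rw [show i = j by omega]
  · intro x hx y hy
    obtain ⟨i, hi, rfl⟩ := hS x hx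
    obtain ⟨j, hj, rfl⟩ := hS y hy
    simp only [hself i (by omega), hself j (by omega)]
    rw [hdist _ _ (by omega) (by omega), hdist _ _ (by omega) (by omega)]
    omega
  · intro x hx hy
    obtain ⟨i, hi, rfl⟩ := hS x hx
    obtain ⟨j, hj, h⟩ := hS _ hy
    simp only [hself i (by omega)] at h
    have h1 := hself (i + k) (by omega)
    have h2 := hself j (by omega)
    rw [h] at h1
    omega

/-- Pairing lemma for legs with lengths `ℓ` attached at `π`. -/
lemma exists_pairing {α β : Type*} [DecidableEq α] [DecidableEq β] (ℓ : α → ℕ) (π : α → β)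
    (B : Finset β) (A : Finset α) (hA : ∀ x ∈ A, π x ∈ B) :
    ∃ (D : Finset α) (σ : α → α), D ⊆ A ∧ (∀ x, σ (σ x) = x) ∧ (∀ x, x ∉ A → σ x = x) ∧
      (∀ x, π (σ x) = π x) ∧ (∀ x ∈ D, σ x ∉ D ∧ ℓ x ≤ ℓ (σ x)) ∧
      ∑ x ∈ A, ℓ x ≤ 2 * ∑ x ∈ D, ℓ x + ∑ b ∈ B, (A.filter (fun x => π x = b)).sup ℓ := by
  induction hN : A.card using Nat.strong_induction_on generalizing A with
  | _ N ih =>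
  subst hN
  by_cases hinj : Set.InjOn π A
  · refine ⟨∅, id, by simp, by simp, by simp, by simp, by simp, ?_⟩
    simp only [Finset.sum_empty, mul_zero, zero_add]
    rw [← Finset.sum_fiberwise_of_maps_to hA]
    refine Finset.sum_le_sum fun b _ => ?_
    have hc : (A.filter (fun x => π x = b)).card ≤ 1 := by
      rw [Finset.card_le_one]
      intro x hx y hy
      simp only [Finset.mem_filter] at hx hy
      exact hinj hx.1 hy.1 (hx.2.trans hy.2.symm)
    calc _ ≤ (A.filter (fun x => π x = b)).card • (A.filter (fun x => π x = b)).sup ℓ :=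
          Finset.sum_le_card_nsmul _ _ _ (fun x hx => Finset.le_sup hx)
      _ ≤ 1 * (A.filter (fun x => π x = b)).sup ℓ := by
          rw [smul_eq_mul]; exact Nat.mul_le_mul_right _ hc
      _ = _ := one_mul _
  · have : ∃ b, 1 < (A.filter (fun x => π x = b)).card := by
      by_contra hcon
      push Not at hcon
      refine hinj fun x hx y hy h => ?_
      exact Finset.card_le_one.1 (hcon (π y)) x (by simp [h]; exact hx) y (by simp; exact hy)
    obtain ⟨b, hb⟩ := this
    obtain ⟨q, hq, hqmax⟩ := Finset.exists_max_image (A.filter (fun x => π x = b)) ℓ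
      (Finset.card_pos.1 (by omega))
    obtain ⟨p, hp, hpmax⟩ := Finset.exists_max_image ((A.filter (fun x => π x = b)).erase q) ℓ
      (Finset.card_pos.1 (by rw [Finset.card_erase_of_mem hq]; omega))
    simp only [Finset.mem_erase, Finset.mem_filter] at hp hq hpmax hqmax
    obtain ⟨hpq, hpA, hpb⟩ := hp
    obtain ⟨hqA, hqb⟩ := hq
    have hpe : p ∈ A.erase q := Finset.mem_erase.2 ⟨hpq, hpA⟩
    have hlt : ((A.erase q).erase p).card < A.card := by
      rw [Finset.card_erase_of_mem hpe, Finset.card_erase_of_mem hqA]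
      have := Finset.card_pos.2 ⟨q, hqA⟩
      omega
    obtain ⟨D, σ, hD, hσσ, hσfix, hσπ, hDσ, hsum⟩ := ih _ hlt ((A.erase q).erase p)
      (fun x hx => hA x (Finset.mem_of_mem_erase (Finset.mem_of_mem_erase hx))) rfl
    have hσp : σ p = p := hσfix p (by simp)
    have hσq : σ q = q := hσfix q (by simp)
    have hpD : p ∉ D := fun h => by simpa using hD h
    have hqD : q ∉ D := fun h => by simpa using hD h
    have hne : ∀ x, x ≠ p → σ x ≠ p := fun x hx h => hx (by rw [← hσσ x, h, hσp])
    have hne' : ∀ x, x ≠ q → σ x ≠ q := fun x hx h => hx (by rw [← hσσ x, h, hσq])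
    refine ⟨insert p D, fun x => if x = p then q else if x = q then p else σ x,
      ?_, ?_, ?_, ?_, ?_, ?_⟩
    · intro x hx
      rcases Finset.mem_insert.1 hx with rfl | hx
      · exact hpA
      · exact Finset.mem_of_mem_erase (Finset.mem_of_mem_erase (hD hx))
    · intro x
      by_cases h1 : x = p
      · subst h1; simp [Ne.symm hpq]
      · by_cases h2 : x = q
        · subst h2; simp [h1]
        · simp [h1, h2, hne x h1, hne' x h2, hσσ]
    · intro x hx
      have h1 : x ≠ p := fun h => hx (h ▸ hpA)
      have h2 : x ≠ q := fun h => hx (h ▸ hqA)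
      simp only [h1, h2, if_false]
      exact hσfix x (fun h => hx (Finset.mem_of_mem_erase (Finset.mem_of_mem_erase h)))
    · intro x
      dsimp only
      split_ifs with h1 h2
      · rw [h1, hpb, hqb]
      · rw [h2, hpb, hqb]
      · exact hσπ x
    · intro x hx
      by_cases h1 : x = p
      · subst h1
        simp only [if_true, Finset.mem_insert, not_or]
        exact ⟨⟨Ne.symm hpq, hqD⟩, hqmax x ⟨hpA, hpb⟩⟩
      · have hxD : x ∈ D := (Finset.mem_insert.1 hx).resolve_left h1
        have h2 : x ≠ q := fun h => hqD (h ▸ hxD)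
        simp only [h1, h2, if_false, Finset.mem_insert, not_or]
        exact ⟨⟨hne x h1, (hDσ x hxD).1⟩, (hDσ x hxD).2⟩
    · rw [← Finset.add_sum_erase A ℓ hqA, ← Finset.add_sum_erase (A.erase q) ℓ hpe,
        Finset.sum_insert hpD]
      have hbB : b ∈ B := hqb ▸ hA q hqA
      rw [← Finset.add_sum_erase B _ hbB] at hsum ⊢
      have e1 : ((((A.erase q).erase p).filter (fun x => π x = b)).sup ℓ) ≤ ℓ p := by
        refine Finset.sup_le fun x hx => ?_
        simp only [Finset.mem_filter, Finset.mem_erase] at hx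
        exact hpmax x ⟨hx.1.2.1, hx.1.2.2, hx.2⟩
      have e2 : ℓ q ≤ (A.filter (fun x => π x = b)).sup ℓ :=
        Finset.le_sup (f := ℓ) (Finset.mem_filter.2 ⟨hqA, hqb⟩)
      have e3 : ∑ c ∈ B.erase b, ((((A.erase q).erase p).filter (fun x => π x = c)).sup ℓ) ≤
          ∑ c ∈ B.erase b, ((A.filter (fun x => π x = c)).sup ℓ) := by
        refine Finset.sum_le_sum fun c _ => Finset.sup_mono ?_
        exact Finset.filter_subset_filter _
          ((Finset.erase_subset _ _).trans (Finset.erase_subset _ _))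
      omega

/-- The counting argument for a rooted haircomb given by its parent function. -/
lemma rooted_bound {V : Type*} [Fintype V] [DecidableEq V] (G : SimpleGraph V)
    (hG : G.Connected) (a : V) (par : V → V)
    (hpar : ∀ v, v ≠ a → G.Adj v (par v) ∧ G.dist a (par v) + 1 = G.dist a v)
    (hedge : ∀ v w, G.Adj v w → (v ≠ a ∧ w = par v) ∨ (w ≠ a ∧ v = par w))
    (P : Finset V) (haP : a ∈ P) (hP : ∀ v ∈ P, v ≠ a → par v ∈ P)
    (hchild : ∀ v w, v ∉ P → w ∉ P → par v ∉ P → par v = par w → v = w) :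
    Fintype.card V ≤ P.card + 2 * homNumber G + P.card * (2 * homNumber G) := by
  have hneA : ∀ v, v ∉ P → v ≠ a := fun v hv h => hv (h ▸ haP)
  have hex : ∀ v, ∃ i, par^[i] v ∈ P := by
    intro v
    induction hm : G.dist a v generalizing v with
    | zero => exact ⟨0, by rw [hG.dist_eq_zero_iff] at hm; simpa [← hm] using haP⟩
    | succ m ih =>
      have hva : v ≠ a := by rintro rfl; simp at hm
      obtain ⟨i, hi⟩ := ih (par v) (by have := (hpar v hva).2; omega)
      exact ⟨i + 1, by simpa using hi⟩
  -- depth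
  obtain ⟨dep, hdep0, hdepS, hdeph⟩ : ∃ dep : V → ℕ, (∀ v, v ∈ P → dep v = 0) ∧
      (∀ v, v ∉ P → dep v = dep (par v) + 1) ∧ ∀ v, dep v ≤ G.dist a v := by
    have h0 : ∀ v, v ∈ P → Nat.find (hex v) = 0 := by
      intro v hv
      simpa using hv
    have hS : ∀ v, v ∉ P → Nat.find (hex v) = Nat.find (hex (par v)) + 1 := by
      intro v hv
      rw [Nat.find_eq_iff]
      refine ⟨by simpa using Nat.find_spec (hex (par v)), ?_⟩
      intro n hn
      cases n with
      | zero => simpa using hv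
      | succ n =>
        rw [Function.iterate_succ_apply]
        exact Nat.find_min (hex (par v)) (by omega)
    refine ⟨fun v => Nat.find (hex v), h0, hS, ?_⟩
    intro v
    beta_reduce
    induction hm : G.dist a v generalizing v with
    | zero =>
      rw [hG.dist_eq_zero_iff] at hm
      subst hm
      rw [h0 _ haP]
    | succ m ih =>
      have hva : v ≠ a := by rintro rfl; simp at hm
      by_cases hv : v ∈ P
      · rw [h0 v hv]; omega
      · rw [hS v hv]
        have := ih (par v) (by have := (hpar v hva).2; omega)
        omega
  have hdeppos : ∀ v, v ∉ P → 1 ≤ dep v := fun v hv => by rw [hdepS v hv]; omega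
  have hdepP : ∀ v, dep v = 0 → v ∈ P := by
    intro v h
    by_contra hv
    have := hdeppos v hv
    omega
  -- first vertex of the leg
  set foot : V → V := fun v => par^[dep v - 1] v with hfoot
  have hfoot1 : ∀ v, dep v = 1 → foot v = v := by
    intro v h; simp [hfoot, h]
  have hfootS : ∀ v, v ∉ P → par v ∉ P → foot v = foot (par v) := by
    intro v hv hv'
    have h1 := hdepS v hv
    have h2 := hdeppos _ hv'
    simp only [hfoot]
    rw [h1, show dep (par v) + 1 - 1 = (dep (par v) - 1) + 1 by omega,
      Function.iterate_succ_apply]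
  have hiter : ∀ j v, v ∉ P → j < dep v →
      par^[j] v ∉ P ∧ foot (par^[j] v) = foot v ∧ dep (par^[j] v) = dep v - j := by
    intro j
    induction j with
    | zero => intro v hv _; simpa using hv
    | succ j ih =>
      intro v hv hj
      have h1 := hdepS v hv
      have h2 : par v ∉ P := fun h => by rw [hdep0 _ h] at h1; omega
      obtain ⟨i1, i2, i3⟩ := ih (par v) h2 (by omega)
      rw [Function.iterate_succ_apply]
      exact ⟨i1, by rw [i2, hfootS v hv h2], by omega⟩
  have huniq : ∀ m v w, v ∉ P → w ∉ P → dep v = m → dep w = m → foot v = foot w → v = w := by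
    intro m
    induction m with
    | zero => intro v w hv _ h; exact absurd (hdepP v h) hv
    | succ m ih =>
      intro v w hv hw hdv hdw hf
      have h1 := hdepS v hv
      have h2 := hdepS w hw
      rcases Nat.eq_zero_or_pos m with hm | hm
      · subst hm
        rwa [hfoot1 v hdv, hfoot1 w hdw] at hf
      · have h3 : par v ∉ P := fun h => by rw [hdep0 _ h] at h1; omega
        have h4 : par w ∉ P := fun h => by rw [hdep0 _ h] at h2; omega
        refine hchild v w hv hw h3 (ih _ _ h3 h4 (by omega) (by omega) ?_)
        rw [← hfootS v hv h3, ← hfootS w hw h4, hf]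
  have hfootd : ∀ v, v ∉ P → foot v ∉ P ∧ dep (foot v) = 1 := by
    intro v hv
    have := hdeppos v hv
    obtain ⟨h1, -, h3⟩ := hiter (dep v - 1) v hv (by omega)
    exact ⟨h1, by simp only [hfoot]; omega⟩
  -- the legs
  set F : Finset V := Finset.univ.filter (fun v => v ∉ P ∧ dep v = 1) with hF
  have hFm : ∀ v, v ∈ F ↔ v ∉ P ∧ dep v = 1 := by intro v; simp [hF]
  set leg : V → Finset V := fun f => Finset.univ.filter (fun v => v ∉ P ∧ foot v = f) with hleg
  have hlegm : ∀ f v, v ∈ leg f ↔ v ∉ P ∧ foot v = f := by intro f v; simp [hleg]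
  have htop : ∀ f, ∃ t, f ∈ F → t ∈ leg f ∧ ∀ v ∈ leg f, dep v ≤ dep t := by
    intro f
    by_cases hf : f ∈ F
    · have hff := (hFm f).1 hf
      obtain ⟨t, ht, hmax⟩ := Finset.exists_max_image (leg f) dep
        ⟨f, (hlegm f f).2 ⟨hff.1, hfoot1 f hff.2⟩⟩
      exact ⟨t, fun _ => ⟨ht, hmax⟩⟩
    · exact ⟨f, fun h => absurd h hf⟩
  choose top htop using htop
  set ℓ : V → ℕ := fun f => dep (top f) with hℓ
  set at' : V → ℕ → V := fun g i => par^[ℓ g - i] (top g) with hat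
  have hatS : ∀ g ∈ F, ∀ i, 1 ≤ i → at' g i ∉ P ∧ foot (at' g i) = g ∧
      (i ≤ ℓ g → dep (at' g i) = i) := by
    intro g hg i hi
    obtain ⟨ht, -⟩ := htop g hg
    rw [hlegm] at ht
    have hpos := hdeppos _ ht.1
    obtain ⟨h1, h2, h3⟩ := hiter (ℓ g - i) (top g) ht.1 (by simp only [hℓ]; omega)
    refine ⟨h1, h2.trans ht.2, fun h => ?_⟩
    simp only [hat]
    rw [h3]
    simp only [hℓ] at h ⊢
    omega
  have hatadj : ∀ g ∈ F, ∀ i, 1 ≤ i → at' g (i + 1) = at' g i ∨ G.Adj (at' g (i + 1)) (at' g i) := by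
    intro g hg i hi
    by_cases h : ℓ g ≤ i
    · left
      simp only [hat]
      rw [show ℓ g - (i + 1) = 0 by omega, show ℓ g - i = 0 by omega]
    · right
      have h1 : at' g i = par (at' g (i + 1)) := by
        simp only [hat]
        rw [show ℓ g - i = (ℓ g - (i + 1)) + 1 by omega, Function.iterate_succ_apply']
      rw [h1]
      exact (hpar _ (hneA _ (hatS g hg (i + 1) (by omega)).1)).1
  have hat1 : ∀ g ∈ F, at' g 1 = g := by
    intro g hg
    obtain ⟨ht, -⟩ := htop g hg
    rw [hlegm] at ht
    have hpos := hdeppos _ ht.1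
    obtain ⟨h1, h2, h3⟩ := hatS g hg 1 le_rfl
    exact (hfoot1 _ (h3 hpos)).symm.trans h2
  have hcard : ∀ f ∈ F, (leg f).card = ℓ f := by
    intro f hf
    have : (leg f).image dep = Finset.Icc 1 (ℓ f) := by
      ext i
      simp only [Finset.mem_image, Finset.mem_Icc]
      constructor
      · rintro ⟨v, hv, rfl⟩
        exact ⟨hdeppos v ((hlegm f v).1 hv).1, (htop f hf).2 v hv⟩
      · rintro ⟨h1, h2⟩
        obtain ⟨h3, h4, h5⟩ := hatS f hf i h1
        exact ⟨at' f i, (hlegm _ _).2 ⟨h3, h4⟩, h5 h2⟩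
    rw [← Finset.card_image_of_injOn (f := dep), this]
    · simp
    · intro v hv w hw h
      have hv := (hlegm _ _).1 hv
      have hw := (hlegm _ _).1 hw
      exact huniq _ v w hv.1 hw.1 rfl h.symm (hv.2.trans hw.2.symm)
  have hsumcard : ∀ D ⊆ F, ((Finset.univ.filter (fun v => v ∉ P ∧ foot v ∈ D)).card =
      ∑ f ∈ D, ℓ f) := by
    intro D hD
    rw [Finset.card_eq_sum_card_fiberwise (f := foot) (t := D)]
    · refine Finset.sum_congr rfl fun f hf => ?_
      rw [← hcard f (hD hf)]
      congr 1
      ext v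
      simp only [Finset.mem_filter, Finset.mem_univ, true_and, hlegm]
      constructor
      · rintro ⟨⟨h1, h2⟩, h3⟩; exact ⟨h1, h3⟩
      · rintro ⟨h1, h3⟩; exact ⟨⟨h1, h3 ▸ hf⟩, h3⟩
    · intro v hv
      simp only [Finset.coe_filter, Finset.mem_univ, true_and, Set.mem_ofPred_eq] at hv
      exact hv.2
  have hfootF : ∀ v, v ∉ P → foot v ∈ F := fun v hv => (hFm _).2 (hfootd v hv)
  have hparF : ∀ f ∈ F, par f ∈ P := by
    intro f hf
    have h := (hFm f).1 hf
    have := hdepS f h.1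
    exact hdepP _ (by omega)
  have htotal : Fintype.card V = P.card + ∑ f ∈ F, ℓ f := by
    rw [← hsumcard F (Finset.Subset.refl _), ← Finset.card_univ,
      ← Finset.card_filter_add_card_filter_not (s := Finset.univ) (fun v => v ∈ P)]
    congr 2
    · ext v; simp
    · ext v
      simp only [Finset.mem_filter, Finset.mem_univ, true_and]
      exact ⟨fun h => ⟨h, hfootF v h⟩, fun h => h.1⟩
  obtain ⟨D, σ, hDF, hσσ, hσfix, hσπ, hDσ, hsum⟩ := exists_pairing ℓ par P F hparF
  have hσF : ∀ f ∈ F, σ f ∈ F := by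
    intro f hf
    by_contra h
    have h1 := hσfix _ h
    rw [hσσ] at h1
    exact h (h1 ▸ hf)
  -- the weak endomorphism
  have hbound : ∑ f ∈ D, ℓ f ≤ homNumber G := by
    rw [← hsumcard D hDF]
    have hval : ∀ v, v ∉ P → foot v ∈ D →
        at' (σ (foot v)) (dep v) ∉ P ∧ foot (at' (σ (foot v)) (dep v)) = σ (foot v) ∧
        dep (at' (σ (foot v)) (dep v)) = dep v := by
      intro v hv hvD
      obtain ⟨h1, h2, h3⟩ := hatS (σ (foot v)) (hσF _ (hfootF v hv)) (dep v) (hdeppos v hv)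
      refine ⟨h1, h2, h3 ?_⟩
      have := (htop (foot v) (hfootF v hv)).2 v ((hlegm _ _).2 ⟨hv, rfl⟩)
      exact this.trans (hDσ _ hvD).2
    have hstep : ∀ v, v ≠ a →
        (if v ∈ P then v else at' (σ (foot v)) (dep v)) =
          (if par v ∈ P then par v else at' (σ (foot (par v))) (dep (par v))) ∨
        G.Adj (if v ∈ P then v else at' (σ (foot v)) (dep v))
          (if par v ∈ P then par v else at' (σ (foot (par v))) (dep (par v))) := by
      intro v hva
      by_cases hv : v ∈ P
      · rw [if_pos hv, if_pos (hP v hv hva)]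
        exact Or.inr (hpar v hva).1
      · have hd := hdepS v hv
        rw [if_neg hv]
        by_cases hv' : par v ∈ P
        · rw [if_pos hv']
          rw [hdep0 _ hv'] at hd
          have hf := hfoot1 v (by omega)
          have hvF : v ∈ F := hf ▸ hfootF v hv
          rw [hf, hd, hat1 _ (hσF v hvF), ← hσπ v]
          exact Or.inr (hpar _ (hneA _ ((hFm _).1 (hσF v hvF)).1)).1
        · rw [if_neg hv', hd, hfootS v hv hv']
          exact hatadj _ (hσF _ (hfootF _ hv')) _ (hdeppos _ hv')
    refine le_homNumber_of_weak G hG (fun v => if v ∈ P then v else at' (σ (foot v)) (dep v))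
      ?_ _ ?_ ?_
    · intro v w hvw
      rcases hedge v w hvw with ⟨h1, rfl⟩ | ⟨h1, rfl⟩
      · exact hstep v h1
      · rcases hstep w h1 with h | h
        · exact Or.inl h.symm
        · exact Or.inr h.symm
    · intro v hv
      simp only [Finset.mem_filter, Finset.mem_univ, true_and] at hv
      obtain ⟨h1, h2, h3⟩ := hval v hv.1 hv.2
      simp only [if_neg hv.1, if_neg h1, h2, h3, hσσ]
      obtain ⟨g1, g2, g3⟩ := hatS (foot v) (hfootF v hv.1) (dep v) (hdeppos v hv.1)
      refine huniq (dep v) _ _ g1 hv.1 (g3 ?_) rfl g2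
      exact (htop (foot v) (hfootF v hv.1)).2 v ((hlegm _ _).2 ⟨hv.1, rfl⟩)
    · intro v hv hv'
      simp only [Finset.mem_filter, Finset.mem_univ, true_and] at hv hv'
      obtain ⟨h1, h2, h3⟩ := hval v hv.1 hv.2
      simp only [if_neg hv.1] at hv'
      rw [h2] at hv'
      exact (hDσ _ hv.2).1 hv'.2
  have hsup : ∑ b ∈ P, (F.filter (fun x => par x = b)).sup ℓ ≤ P.card * (2 * homNumber G) := by
    rw [← smul_eq_mul]
    refine Finset.sum_le_card_nsmul _ _ _ fun b _ => Finset.sup_le fun f _ => ?_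
    exact (hdeph _).trans (dist_le_two_homNumber G hG _ _)
  omega

/-- In a tree, every path is a shortest path. -/
lemma path_length_eq_dist {V : Type*} (G : SimpleGraph V) (hG : G.IsTree) {u v : V}
    (p : G.Walk u v) (hp : p.IsPath) : p.length = G.dist u v := by
  obtain ⟨q, hq, hq'⟩ := hG.connected.exists_path_of_dist u v
  rw [← hq', (hG.existsUnique_path u v).unique hp hq]

/-- In a rooted tree, parents are unique. -/
lemma parent_unique {V : Type*} (G : SimpleGraph V) (hG : G.IsTree) (a v w w' : V)
    (h : G.Adj v w) (h' : G.Adj v w') (hd : G.dist a w + 1 = G.dist a v)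
    (hd' : G.dist a w' + 1 = G.dist a v) : w = w' := by
  obtain ⟨q, hq⟩ := hG.connected.exists_walk_length_eq_dist a w
  obtain ⟨q', hq'⟩ := hG.connected.exists_walk_length_eq_dist a w'
  have h1 := (q.concat h.symm).isPath_of_length_eq_dist (by simp; omega)
  have h2 := (q'.concat h'.symm).isPath_of_length_eq_dist (by simp; omega)
  have := (hG.existsUnique_path a v).unique h1 h2
  have := congrArg SimpleGraph.Walk.penultimate this
  simpa using this

lemma haircomb_bound {V : Type*} [Fintype V] (G : SimpleGraph V) [DecidableRel G.Adj]
    (hG : IsHaircomb G) : Fintype.card V ≤ 4 * (homNumber G + 1) ^ 2 := by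
  classical
  obtain ⟨hT, a, b, p, hp, hdeg⟩ := hG
  have hC := hT.connected
  have hpe : ∀ v, ∃ w, v ≠ a → G.Adj v w ∧ G.dist a w + 1 = G.dist a v := by
    intro v
    by_cases hv : v = a
    · exact ⟨v, fun h => absurd hv h⟩
    · obtain ⟨q, hq⟩ := hC.exists_walk_length_eq_dist a v
      have hpos : 0 < q.length := by
        rw [hq]; exact hC.pos_dist_of_ne (Ne.symm hv)
      have h1 := dist_getVert_eq G hC q hq 0 (q.length - 1) (by omega)
      have h2 := q.adj_getVert_succ (i := q.length - 1) (by omega)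
      rw [show q.length - 1 + 1 = q.length by omega, q.getVert_length] at h2
      rw [zero_add, q.getVert_zero] at h1
      exact ⟨q.getVert (q.length - 1), fun _ => ⟨h2.symm, by omega⟩⟩
  choose par hpar using hpe
  have hne : ∀ v w, G.dist a w + 1 = G.dist a v → v ≠ a := by
    rintro v w h rfl
    simp at h
  have hmain := rooted_bound G hC a par hpar ?_ p.support.toFinset (by simp) ?_ ?_
  · have hs : p.support.toFinset.card ≤ 2 * homNumber G + 1 := by
      refine (List.toFinset_card_le _).trans ?_
      rw [SimpleGraph.Walk.length_support, path_length_eq_dist G hT p hp]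
      have := dist_le_two_homNumber G hC a b
      omega
    nlinarith [Nat.mul_le_mul_right (2 * homNumber G) hs]
  · intro v w hvw
    rcases hT.dist_eq_dist_add_one_of_adj a hvw with h | h
    · have hv := hne v w h.symm
      exact Or.inl ⟨hv, parent_unique G hT a v w (par v) hvw (hpar v hv).1 h.symm (hpar v hv).2⟩
    · have hw := hne w v h.symm
      exact Or.inr ⟨hw, parent_unique G hT a w v (par w) hvw.symm (hpar w hw).1 h.symm
        (hpar w hw).2⟩
  · intro v hv hva
    rw [List.mem_toFinset, SimpleGraph.Walk.mem_support_iff_exists_getVert] at hv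
    obtain ⟨i, rfl, hi⟩ := hv
    have hi0 : i ≠ 0 := by rintro rfl; simp at hva
    have hl := path_length_eq_dist G hT p hp
    have h1 := dist_getVert_eq G hC p hl 0 (i - 1) (by omega)
    have h2 := dist_getVert_eq G hC p hl 0 i (by omega)
    have h3 := p.adj_getVert_succ (i := i - 1) (by omega)
    rw [show i - 1 + 1 = i by omega] at h3
    rw [zero_add, p.getVert_zero] at h1 h2
    rw [parent_unique G hT a _ (par (p.getVert i)) (p.getVert (i - 1)) (hpar _ hva).1 h3.symm
      (hpar _ hva).2 (by omega)]
    exact List.mem_toFinset.2 (p.getVert_mem_support _)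
  · intro v w hv hw hpv hvw
    rw [List.mem_toFinset] at hv hw hpv
    by_contra hne'
    have hva : v ≠ a := by rintro rfl; simp at hv
    have hwa : w ≠ a := by rintro rfl; simp at hw
    have hpa : par v ≠ a := by intro h; rw [h] at hpv; simp at hpv
    have h1 := hpar v hva
    have h2 := hpar w hwa
    have h3 := hpar _ hpa
    rw [← hvw] at h2
    have hsub : ({par (par v), v, w} : Finset V) ⊆ G.neighborFinset (par v) := by
      intro x hx
      simp only [Finset.mem_insert, Finset.mem_singleton] at hx
      rw [SimpleGraph.mem_neighborFinset]
      rcases hx with rfl | rfl | rfl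
      · exact h3.1
      · exact h1.1.symm
      · exact h2.1.symm
    have hc := Finset.card_le_card hsub
    rw [SimpleGraph.card_neighborFinset_eq_degree, Finset.card_eq_three.2
      ⟨par (par v), v, w, ?_, ?_, hne', rfl⟩] at hc
    · have := hdeg _ hpv
      omega
    · intro h
      rw [h] at h3
      omega
    · intro h
      rw [h] at h3
      omega

/-- For every haircomb `T` on `n` vertices, `h(T) ≥ √n/2 − 1`. -/
theorem stmt7 {V : Type*} [Fintype V] (G : SimpleGraph V) [DecidableRel G.Adj]
    (hG : IsHaircomb G) (n : ℕ) (hn : Fintype.card V = n) :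
    Real.sqrt n / 2 - 1 ≤ homNumber G := by
  subst hn
  have h := haircomb_bound G hG
  have h' : (Fintype.card V : ℝ) ≤ (2 * ((homNumber G : ℝ) + 1)) ^ 2 := by
    have : (Fintype.card V : ℝ) ≤ 4 * ((homNumber G : ℝ) + 1) ^ 2 := by exact_mod_cast h
    linarith [this, mul_pow (2 : ℝ) ((homNumber G : ℝ) + 1) 2]
  have h2 : Real.sqrt (Fintype.card V) ≤ 2 * ((homNumber G : ℝ) + 1) :=
    Real.sqrt_le_iff.2 ⟨by positivity, h'⟩
  linarith
end

section
/- For every spider T on n vertices with exactly 3 legs, h(T) ≥ 5n/12 − 1. (The paper states h(T) ≥ 5n/12 with floors and ceilings omitted.) -/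
open Finset

/-- A spider with head `v` and `k` legs: a tree in which `v` has degree `k` and every
other vertex has degree at most `2`.  (The components of `T − v` are then exactly `k`
vertex-disjoint paths, each joined to `v` by one edge at an endpoint.) -/
def IsSpider {V : Type*} [Fintype V] (G : SimpleGraph V) [DecidableRel G.Adj]
    (v : V) (k : ℕ) : Prop :=
  G.IsTree ∧ G.degree v = k ∧ ∀ u, u ≠ v → G.degree u ≤ 2

lemma distMultiset_image_s8 {V α : Type*} [DecidableEq α] [DecidableEq V] (G : SimpleGraph V)
    (X : Finset α) (f : α → V) (hf : Set.InjOn f X) :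
    distMultiset G (X.image f) =
      (X.sym2.filter fun p => ¬ p.IsDiag).val.map
        (Sym2.lift ⟨fun a b => G.dist (f a) (f b), fun _ _ => SimpleGraph.dist_comm⟩) := by
  have key : ((X.image f).sym2.filter fun p => ¬ p.IsDiag)
      = (X.sym2.filter fun p => ¬ p.IsDiag).image (Sym2.map f) := by
    rw [Finset.sym2_image]
    ext p
    simp only [mem_filter, mem_image]
    constructor
    · rintro ⟨⟨q, hq, rfl⟩, hd⟩
      refine ⟨q, ⟨hq, ?_⟩, rfl⟩
      induction q with
      | _ a b =>
        simp only [Sym2.map_mk, Sym2.mk_isDiag_iff] at hd ⊢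
        intro h; exact hd (by rw [h])
    · rintro ⟨q, ⟨hq, hd⟩, rfl⟩
      refine ⟨⟨q, hq, rfl⟩, ?_⟩
      induction q with
      | _ a b =>
        simp only [Sym2.map_mk, Sym2.mk_isDiag_iff, mk_mem_sym2_iff] at hd hq ⊢
        intro h; exact hd (hf hq.1 hq.2 h)
  have hinj : Set.InjOn (Sym2.map f) (X.sym2.filter fun p => ¬ p.IsDiag : Finset (Sym2 α)) := by
    intro p hp q hq h
    simp only [coe_filter, Set.mem_ofPred_eq] at hp hq
    obtain ⟨hp, -⟩ := hp
    obtain ⟨hq, -⟩ := hq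
    induction p with
    | _ a b =>
      induction q with
      | _ c d =>
        simp only [Sym2.map_mk, mk_mem_sym2_iff, Sym2.eq_iff] at hp hq h ⊢
        rcases h with ⟨h1, h2⟩ | ⟨h1, h2⟩
        · exact Or.inl ⟨hf hp.1 hq.1 h1, hf hp.2 hq.2 h2⟩
        · exact Or.inr ⟨hf hp.1 hq.2 h1, hf hp.2 hq.1 h2⟩
  have h0 : distMultiset G (X.image f) = ((X.image f).sym2.filter fun p => ¬ p.IsDiag).val.map
    (Sym2.lift ⟨fun a b => G.dist a b, fun _ _ => SimpleGraph.dist_comm⟩) := by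
    unfold distMultiset
    congr!
  rw [h0, key, Finset.image_val_of_injOn hinj, Multiset.map_map]
  apply Multiset.map_congr rfl
  intro p _
  induction p with
  | _ a b => simp

lemma homNumber_ge {V α : Type*} [Fintype V] [DecidableEq α] (G : SimpleGraph V)
    (X : Finset α) (f g : α → V) (hf : Set.InjOn f X) (hg : Set.InjOn g X)
    (hd : ∀ x ∈ X, ∀ y ∈ X, G.dist (f x) (f y) = G.dist (g x) (g y))
    (hne : ∀ x ∈ X, ∀ y ∈ X, f x ≠ g y) : X.card ≤ homNumber G := by
  classical
  apply le_csSup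
  · refine ⟨Fintype.card V, ?_⟩
    rintro h ⟨S, -, -, rfl, -⟩
    exact Finset.card_le_univ S
  · refine ⟨X.image f, X.image g, ⟨?_, ?_⟩, Finset.card_image_of_injOn hf,
      Finset.card_image_of_injOn hg⟩
    · rw [Finset.disjoint_left]
      intro a ha hb
      rw [mem_image] at ha hb
      obtain ⟨x, hx, rfl⟩ := ha
      obtain ⟨y, hy, h⟩ := hb
      exact hne x hx y hy h.symm
    · rw [distMultiset_image_s8 G X f hf, distMultiset_image_s8 G X g hg]
      apply Multiset.map_congr rfl
      intro p hp
      have hp' : p ∈ X.sym2 := (mem_filter.1 hp).1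
      induction p with
      | _ a b =>
        rw [mk_mem_sym2_iff] at hp'
        simpa using hd a hp'.1 b hp'.2

section tree
variable {V : Type*} {G : SimpleGraph V}

lemma tree_parent (hT : G.Connected) (r x : V) (h : x ≠ r) :
    ∃ y, G.Adj x y ∧ G.dist r x = G.dist r y + 1 := by
  obtain ⟨p, hp⟩ := hT.exists_walk_length_eq_dist x r
  cases p with
  | nil => exact absurd rfl h
  | @cons _ y _ hxy q =>
    refine ⟨y, hxy, ?_⟩
    have h1 := SimpleGraph.dist_le q
    have h2 := hT.dist_triangle (u := x) (v := y) (w := r)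
    rw [SimpleGraph.dist_eq_one_iff_adj.2 hxy] at h2
    rw [SimpleGraph.Walk.length_cons] at hp
    rw [SimpleGraph.dist_comm (u := r), SimpleGraph.dist_comm (u := r)]
    omega

lemma tree_parent_unique (hT : G.IsTree) (r x y z : V) (hy : G.Adj x y) (hz : G.Adj x z)
    (h1 : G.dist r x = G.dist r y + 1) (h2 : G.dist r x = G.dist r z + 1) : y = z := by
  obtain ⟨p, hp⟩ := hT.connected.exists_walk_length_eq_dist y r
  obtain ⟨q, hq⟩ := hT.connected.exists_walk_length_eq_dist z r
  have e1 : (SimpleGraph.Walk.cons hy p).IsPath := by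
    apply SimpleGraph.Walk.isPath_of_length_eq_dist
    rw [SimpleGraph.Walk.length_cons, hp, SimpleGraph.dist_comm (u := x), h1,
      SimpleGraph.dist_comm]
  have e2 : (SimpleGraph.Walk.cons hz q).IsPath := by
    apply SimpleGraph.Walk.isPath_of_length_eq_dist
    rw [SimpleGraph.Walk.length_cons, hq, SimpleGraph.dist_comm (u := x), h2,
      SimpleGraph.dist_comm]
  have := (hT.existsUnique_path x r).unique e1 e2
  have := congrArg SimpleGraph.Walk.snd this
  simpa using this

/-- `u` lies in the branch at `v` through the neighbour `w`. -/
def InBranch (G : SimpleGraph V) (v w u : V) : Prop := G.dist v u = G.dist w u + 1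

lemma branch_ne {v w u : V} (h : InBranch G v w u) : u ≠ v := by
  rintro rfl
  simp [InBranch] at h

lemma exists_branch (hT : G.IsTree) {v u : V} (h : u ≠ v) :
    ∃ w, G.Adj v w ∧ InBranch G v w u := by
  obtain ⟨w, h1, h2⟩ := tree_parent hT.connected u v h.symm
  refine ⟨w, h1, ?_⟩
  unfold InBranch
  rw [SimpleGraph.dist_comm, h2, SimpleGraph.dist_comm]

lemma branch_unique (hT : G.IsTree) {v w w' u : V} (hw : G.Adj v w) (hw' : G.Adj v w')
    (h : InBranch G v w u) (h' : InBranch G v w' u) : w = w' := by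
  unfold InBranch at h h'
  apply tree_parent_unique hT u v w w' hw hw'
  · rw [SimpleGraph.dist_comm, h, SimpleGraph.dist_comm]
  · rw [SimpleGraph.dist_comm, h', SimpleGraph.dist_comm]

lemma branch_up (hT : G.IsTree) {v w u x : V} (hw : G.Adj v w) (h : InBranch G v w u)
    (hux : G.Adj u x) (hd : G.dist v x = G.dist v u + 1) : InBranch G v w x := by
  unfold InBranch at *
  have t1 := hT.connected.dist_triangle (u := w) (v := u) (w := x)
  have t2 := hT.connected.dist_triangle (u := v) (v := w) (w := x)
  rw [SimpleGraph.dist_eq_one_iff_adj.2 hux] at t1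
  rw [SimpleGraph.dist_eq_one_iff_adj.2 hw] at t2
  omega

lemma branch_adj (hT : G.IsTree) {v w u x : V} (hw : G.Adj v w) (h : InBranch G v w u)
    (hux : G.Adj u x) (hx : x ≠ v) : InBranch G v w x := by
  rcases hT.dist_eq_dist_add_one_of_adj v hux with hd | hd
  · obtain ⟨w', hw', hb⟩ := exists_branch hT hx
    have := branch_up hT hw' hb hux.symm hd
    rwa [branch_unique hT hw hw' h this]
  · exact branch_up hT hw h hux hd

lemma branch_walk (hT : G.IsTree) {v w : V} (hw : G.Adj v w) {u y : V} (p : G.Walk u y)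
    (hu : InBranch G v w u) (hy : ¬ InBranch G v w y) :
    G.dist v u + G.dist v y ≤ p.length := by
  induction p with
  | nil => exact absurd hu hy
  | @cons a b c hab q ih =>
    rw [SimpleGraph.Walk.length_cons]
    by_cases hb : b = v
    · subst hb
      have := SimpleGraph.dist_le q
      rw [SimpleGraph.dist_eq_one_iff_adj.2 hab.symm]
      omega
    · have := ih (branch_adj hT hw hu hab hb) hy
      have := hT.dist_eq_dist_add_one_of_adj v hab
      omega

lemma branch_dist (hT : G.IsTree) {v w : V} (hw : G.Adj v w) {u y : V}
    (hu : InBranch G v w u) (hy : ¬ InBranch G v w y) :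
    G.dist u y = G.dist v u + G.dist v y := by
  obtain ⟨p, hp⟩ := hT.connected.exists_walk_length_eq_dist u y
  have h1 := branch_walk hT hw p hu hy
  have h2 := hT.connected.dist_triangle (u := u) (v := v) (w := y)
  rw [SimpleGraph.dist_comm (u := u) (v := v)] at h2
  omega

lemma branch_inj [Fintype V] [DecidableRel G.Adj] (hT : G.IsTree) {v w : V} (hw : G.Adj v w)
    (hdeg : ∀ u, u ≠ v → G.degree u ≤ 2) (k : ℕ) : ∀ u u', InBranch G v w u →
    InBranch G v w u' → G.dist v u = k + 1 → G.dist v u' = k + 1 → u = u' := by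
  classical
  induction k with
  | zero =>
    intro u u' hu hu' h h'
    unfold InBranch at hu hu'
    have e1 := (hT.connected.dist_eq_zero_iff (u := w) (v := u)).1 (by omega)
    have e2 := (hT.connected.dist_eq_zero_iff (u := w) (v := u')).1 (by omega)
    rw [← e1, ← e2]
  | succ k ih =>
    intro u u' hu hu' h h'
    obtain ⟨p, hp, hpd⟩ := tree_parent hT.connected v u (branch_ne hu)
    obtain ⟨p', hp', hpd'⟩ := tree_parent hT.connected v u' (branch_ne hu')
    have hpv : p ≠ v := by
      rintro rfl
      rw [SimpleGraph.dist_self] at hpd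
      omega
    have hpv' : p' ≠ v := by
      rintro rfl
      rw [SimpleGraph.dist_self] at hpd'
      omega
    have e := ih p p' (branch_adj hT hw hu hp hpv) (branch_adj hT hw hu' hp' hpv')
      (by omega) (by omega)
    subst e
    obtain ⟨q, hq, hqd⟩ := tree_parent hT.connected v p hpv
    by_contra hne
    have hsub : ({u, u', q} : Finset V) ⊆ G.neighborFinset p := by
      intro x hx
      simp only [mem_insert, mem_singleton] at hx
      rw [SimpleGraph.mem_neighborFinset]
      rcases hx with rfl | rfl | rfl
      · exact hp.symm
      · exact hp'.symm
      · exact hq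
    have h1 := Finset.card_le_card hsub
    rw [SimpleGraph.card_neighborFinset_eq_degree] at h1
    have h2 := hdeg p hpv
    have h3 : ({u, u', q} : Finset V).card = 3 := by
      apply Finset.card_eq_three.2
      refine ⟨u, u', q, hne, ?_, ?_, rfl⟩
      · rintro rfl; omega
      · rintro rfl; omega
    omega

end tree

/-- `e 0, e 1, …, e l` is a geodesic. -/
def Sg {V : Type*} (G : SimpleGraph V) (e : ℕ → V) (l : ℕ) : Prop :=
  ∀ j k, j ≤ k → k ≤ l → G.dist (e j) (e k) = k - j

/-- Vertices of two different legs are joined through the head. -/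
def Pr {V : Type*} (G : SimpleGraph V) (e : ℕ → V) (l : ℕ) (e' : ℕ → V) (l' : ℕ) : Prop :=
  ∀ j k, j ≤ l → k ≤ l' → G.dist (e j) (e' k) = j + k

lemma Pr.symm {V : Type*} {G : SimpleGraph V} {e e' : ℕ → V} {l l' : ℕ}
    (h : Pr G e l e' l') : Pr G e' l' e l := by
  intro j k hj hk
  rw [SimpleGraph.dist_comm, h k j hk hj, add_comm]

lemma leg_exists {V : Type*} [Fintype V] (G : SimpleGraph V) [DecidableRel G.Adj] (v : V)
    (hT : G.IsTree) (hdeg : ∀ u, u ≠ v → G.degree u ≤ 2) (w : V) (hw : G.Adj v w) :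
    ∃ (e : ℕ → V) (l : ℕ), Sg G e l ∧ e 0 = v ∧
      (∀ k, 1 ≤ k → k ≤ l → InBranch G v w (e k) ∧ G.dist v (e k) = k) ∧
      {u | InBranch G v w u}.ncard = l := by
  classical
  set B : Finset V := univ.filter fun u => InBranch G v w u with hB
  have hmem : ∀ u, u ∈ B ↔ InBranch G v w u := by simp [hB]
  have hwB : w ∈ B := by
    rw [hmem]
    simp [InBranch, SimpleGraph.dist_eq_one_iff_adj.2 hw]
  obtain ⟨m, hm, hmax⟩ := Finset.exists_max_image B (fun u => G.dist v u) ⟨w, hwB⟩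
  set l := G.dist v m with hl
  have hpos : ∀ u, InBranch G v w u → 1 ≤ G.dist v u := by
    intro u hu; unfold InBranch at hu; omega
  have hdown : ∀ t, t < l → ∃ u, InBranch G v w u ∧ G.dist v u = l - t := by
    intro t
    induction t with
    | zero => intro _; exact ⟨m, (hmem m).1 hm, by omega⟩
    | succ t ih =>
      intro ht
      obtain ⟨u, hu, hd⟩ := ih (by omega)
      obtain ⟨p, hp, hpd⟩ := tree_parent hT.connected v u (branch_ne hu)
      refine ⟨p, branch_adj hT hw hu hp ?_, by omega⟩
      rintro rfl
      rw [SimpleGraph.dist_self] at hpd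
      omega
  have hex : ∀ k, ∃ u, (k = 0 → u = v) ∧
      (1 ≤ k → k ≤ l → InBranch G v w u ∧ G.dist v u = k) := by
    intro k
    by_cases hk : 1 ≤ k ∧ k ≤ l
    · obtain ⟨u, hu, hd⟩ := hdown (l - k) (by omega)
      exact ⟨u, by omega, fun _ _ => ⟨hu, by omega⟩⟩
    · exact ⟨v, fun _ => rfl, fun h1 h2 => absurd ⟨h1, h2⟩ hk⟩
  choose e he0 he using hex
  have e0 : e 0 = v := he0 0 rfl
  have hdist : ∀ k, k ≤ l → G.dist v (e k) = k := by
    intro k hk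
    rcases Nat.eq_zero_or_pos k with rfl | h
    · rw [e0, SimpleGraph.dist_self]
    · exact (he k h hk).2
  have hadj : ∀ k, k + 1 ≤ l → G.Adj (e k) (e (k + 1)) := by
    intro k hk
    obtain ⟨hu, hd⟩ := he (k + 1) (by omega) hk
    obtain ⟨p, hp, hpd⟩ := tree_parent hT.connected v (e (k + 1)) (branch_ne hu)
    have : p = e k := by
      rcases Nat.eq_zero_or_pos k with rfl | h
      · have := (hT.connected.dist_eq_zero_iff (u := v) (v := p)).1 (by omega)
        rw [e0, this]
      · obtain ⟨hu', hd'⟩ := he k h (by omega)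
        have hpv : p ≠ v := by
          rintro rfl
          rw [SimpleGraph.dist_self] at hpd
          omega
        exact branch_inj hT hw hdeg (k - 1) _ _ (branch_adj hT hw hu hp hpv) hu'
          (by omega) (by omega)
    rw [← this]
    exact hp.symm
  refine ⟨e, l, ?_, e0, he, ?_⟩
  · have hle : ∀ t j, j + t ≤ l → G.dist (e j) (e (j + t)) ≤ t := by
      intro t
      induction t with
      | zero => intro j _; simp
      | succ t ih =>
        intro j hj
        have h1 := ih j (by omega)
        have h2 := hT.connected.dist_triangle (u := e j) (v := e (j + t)) (w := e (j + t + 1))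
        rw [SimpleGraph.dist_eq_one_iff_adj.2 (hadj (j + t) (by omega))] at h2
        rw [← add_assoc]
        omega
    intro j k hjk hk
    have h1 := hle (k - j) j (by omega)
    rw [Nat.add_sub_cancel' hjk] at h1
    have h2 := hT.connected.dist_triangle (u := v) (v := e j) (w := e k)
    rw [hdist j (by omega), hdist k hk] at h2
    omega
  · have : {u | InBranch G v w u} = ((B : Finset V) : Set V) := by
      ext u; simp [hB]
    rw [this, Set.ncard_coe_finset]
    have : B.card = (Finset.Icc 1 l).card := by
      apply Finset.card_nbij (fun u => G.dist v u)
      · intro u hu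
        rw [mem_coe, mem_Icc]
        exact ⟨hpos u ((hmem u).1 hu), hmax u hu⟩
      · intro u hu u' hu' h
        have hu := (hmem u).1 hu
        have hu' := (hmem u').1 hu'
        have := hpos u hu
        simp only at h
        exact branch_inj hT hw hdeg (G.dist v u - 1) u u' hu hu' (by omega) (by omega)
      · intro k hk
        rw [mem_coe, mem_Icc] at hk
        obtain ⟨h1, h2⟩ := he k hk.1 hk.2
        exact ⟨e k, (hmem _).2 h1, h2⟩
    rw [this]; simp

lemma spider_legs {V : Type*} [Fintype V] (G : SimpleGraph V) [DecidableRel G.Adj] (v : V)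
    (hS : IsSpider G v 3) : ∃ (e₁ e₂ e₃ : ℕ → V) (a b c : ℕ),
      Sg G e₁ a ∧ Sg G e₂ b ∧ Sg G e₃ c ∧
      Pr G e₁ a e₂ b ∧ Pr G e₁ a e₃ c ∧ Pr G e₂ b e₃ c ∧
      Fintype.card V = a + b + c + 1 := by
  classical
  obtain ⟨hT, hv, hdeg⟩ := hS
  rw [← SimpleGraph.card_neighborFinset_eq_degree] at hv
  obtain ⟨w₁, w₂, w₃, h12, h13, h23, hN⟩ := Finset.card_eq_three.1 hv
  have hN' : ∀ w, G.Adj v w ↔ w = w₁ ∨ w = w₂ ∨ w = w₃ := by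
    intro w
    rw [← SimpleGraph.mem_neighborFinset, hN]; simp
  have a1 := (hN' w₁).2 (by simp)
  have a2 := (hN' w₂).2 (by simp)
  have a3 := (hN' w₃).2 (by simp)
  obtain ⟨e₁, a, s1, z1, b1, c1⟩ := leg_exists G v hT hdeg w₁ a1
  obtain ⟨e₂, b, s2, z2, b2, c2⟩ := leg_exists G v hT hdeg w₂ a2
  obtain ⟨e₃, c, s3, z3, b3, c3⟩ := leg_exists G v hT hdeg w₃ a3
  have pr : ∀ (e e' : ℕ → V) (l l' : ℕ) (w w' : V), G.Adj v w → G.Adj v w' → w ≠ w' →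
      e 0 = v → e' 0 = v →
      (∀ k, 1 ≤ k → k ≤ l → InBranch G v w (e k) ∧ G.dist v (e k) = k) →
      (∀ k, 1 ≤ k → k ≤ l' → InBranch G v w' (e' k) ∧ G.dist v (e' k) = k) →
      Pr G e l e' l' := by
    intro e e' l l' w w' hw hw' hne z z' hb hb' j k hj hk
    have hk' : G.dist v (e' k) = k := by
      rcases Nat.eq_zero_or_pos k with rfl | h
      · rw [z', SimpleGraph.dist_self]
      · exact (hb' k h hk).2
    rcases Nat.eq_zero_or_pos j with rfl | h
    · rw [z, hk', zero_add]
    · obtain ⟨h1, h2⟩ := hb j h hj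
      rw [branch_dist hT hw h1, h2, hk']
      rcases Nat.eq_zero_or_pos k with rfl | h'
      · rw [z']; intro hh; exact branch_ne hh rfl
      · intro hh
        exact hne (branch_unique hT hw hw' hh (hb' k h' hk).1)
  refine ⟨e₁, e₂, e₃, a, b, c, s1, s2, s3, pr _ _ _ _ _ _ a1 a2 h12 z1 z2 b1 b2,
    pr _ _ _ _ _ _ a1 a3 h13 z1 z3 b1 b3, pr _ _ _ _ _ _ a2 a3 h23 z2 z3 b2 b3, ?_⟩
  rw [← c1, ← c2, ← c3, ← Nat.card_eq_fintype_card, ← Set.ncard_univ]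
  have hu : (Set.univ : Set V) = insert v (({u | InBranch G v w₁ u} ∪ {u | InBranch G v w₂ u}) ∪
      {u | InBranch G v w₃ u}) := by
    ext u
    simp only [Set.mem_univ, true_iff, Set.mem_insert_iff, Set.mem_union, Set.mem_setOf_eq]
    by_cases h : u = v
    · exact Or.inl h
    · obtain ⟨w, hw, hb⟩ := exists_branch hT h
      rcases (hN' w).1 hw with rfl | rfl | rfl <;> tauto
  rw [hu, Set.ncard_insert_of_notMem, Set.ncard_union_eq, Set.ncard_union_eq]
  · rw [Set.disjoint_left]
    intro u h1 h2
    exact h12 (branch_unique hT a1 a2 h1 h2)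
  · rw [Set.disjoint_left]
    rintro u (h1 | h1) h2
    · exact h13 (branch_unique hT a1 a3 h1 h2)
    · exact h23 (branch_unique hT a2 a3 h1 h2)
  · rintro ((h | h) | h) <;> exact branch_ne h rfl

/-- Positions on the path formed by two legs: nonnegative on `e`, negative on `e'`. -/
def posn {V : Type*} (e e' : ℕ → V) (z : ℤ) : V := if 0 ≤ z then e z.toNat else e' (-z).toNat

lemma posn_dist {V : Type*} {G : SimpleGraph V} {e e' : ℕ → V} {l l' : ℕ}
    (h : Sg G e l) (h' : Sg G e' l') (hp : Pr G e l e' l') (x y : ℤ)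
    (hx : -l' ≤ x) (hx' : x ≤ l) (hy : -l' ≤ y) (hy' : y ≤ l) :
    (G.dist (posn e e' x) (posn e e' y) : ℤ) = |x - y| := by
  have main : ∀ x y : ℤ, x ≤ y → -l' ≤ x → x ≤ l → -l' ≤ y → y ≤ l →
      (G.dist (posn e e' x) (posn e e' y) : ℤ) = y - x := by
    intro x y hxy hx hx' hy hy'
    unfold posn
    split_ifs with h1 h2 h2
    · rw [h _ _ (by omega) (by omega)]; omega
    · omega
    · rw [hp.symm _ _ (by omega) (by omega)]; omega
    · rw [SimpleGraph.dist_comm, h' _ _ (by omega) (by omega)]; omega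
  rcases le_total x y with hxy | hxy
  · rw [main x y hxy hx hx' hy hy', abs_of_nonpos (by omega)]; omega
  · rw [SimpleGraph.dist_comm, main y x hxy hy hy' hx hx', abs_of_nonneg (by omega)]

lemma path_bound {V : Type*} [Fintype V] {G : SimpleGraph V} {e e' : ℕ → V} {l l' : ℕ}
    (h : Sg G e l) (h' : Sg G e' l') (hp : Pr G e l e' l') :
    l + l' ≤ 2 * homNumber G := by
  set m := (l + l' + 1) / 2 with hm
  have hd := posn_dist h h' hp
  have inj : ∀ x y : ℤ, -l' ≤ x → x ≤ l → -l' ≤ y → y ≤ l →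
      posn e e' x = posn e e' y → x = y := by
    intro x y h1 h2 h3 h4 he
    have := hd x y h1 h2 h3 h4
    rw [he, SimpleGraph.dist_self] at this
    have := abs_eq_zero.1 this.symm
    omega
  have key := homNumber_ge G (Finset.Ico (-l' : ℤ) (-l' + m)) (posn e e')
    (fun x => posn e e' (x + m)) ?_ ?_ ?_ ?_
  · rw [Int.card_Ico] at key
    omega
  · intro x hx y hy he
    simp only [coe_Ico, Set.mem_Ico] at hx hy
    exact inj x y (by omega) (by omega) (by omega) (by omega) he
  · intro x hx y hy he
    simp only [coe_Ico, Set.mem_Ico] at hx hy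
    have := inj (x + m) (y + m) (by omega) (by omega) (by omega) (by omega) he
    omega
  · intro x hx y hy
    simp only [mem_Ico] at hx hy
    zify
    rw [hd x y (by omega) (by omega) (by omega) (by omega),
      hd (x + m) (y + m) (by omega) (by omega) (by omega) (by omega)]
    congr 1; ring
  · intro x hx y hy he
    simp only [mem_Ico] at hx hy
    have := inj x (y + m) (by omega) (by omega) (by omega) (by omega) he
    omega

lemma count_odd_blocks (d N : ℕ) (hd : 1 ≤ d) :
    N ≤ d + 2 * ((Finset.range N).filter fun x => (x / d) % 2 = 1).card := by
  have h1 := Finset.card_filter_add_card_filter_not (s := Finset.range N)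
    (fun x => (x / d) % 2 = 1)
  rw [Finset.card_range] at h1
  have h2 : ((Finset.range N).filter fun x => ¬ (x / d) % 2 = 1).card ≤
      ((Finset.range d) ∪ ((Finset.range N).filter fun x => (x / d) % 2 = 1).image
        (fun x => x + d)).card := by
    apply Finset.card_le_card
    intro x hx
    simp only [mem_filter, mem_range, mem_union, mem_image] at hx ⊢
    by_cases hxd : x < d
    · exact Or.inl hxd
    · right
      obtain ⟨y, rfl⟩ : ∃ y, x = y + d := ⟨x - d, by omega⟩
      refine ⟨y, ⟨by omega, ?_⟩, rfl⟩
      rw [Nat.add_div_right y (by omega)] at hx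
      omega
  have h3 := Finset.card_union_le (Finset.range d)
    (((Finset.range N).filter fun x => (x / d) % 2 = 1).image (fun x => x + d))
  have h4 : (((Finset.range N).filter fun x => (x / d) % 2 = 1).image (fun x => x + d)).card ≤ _ :=
    Finset.card_image_le
  rw [Finset.card_range] at h3
  omega

lemma spider_bound {V : Type*} [Fintype V] {G : SimpleGraph V} (hG : G.Connected)
    {e f g : ℕ → V} {L p q : ℕ}
    (he : Sg G e L) (hf : Sg G f p) (hg : Sg G g q)
    (hef : Pr G e L f p) (heg : Pr G e L g q) (hfg : Pr G f p g q)
    (d : ℕ) (hd : 1 ≤ d) (hdL : d ≤ L + 1) (hpq : p ≤ q + d) :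
    2 * p + L + 1 ≤ 2 * homNumber G + 2 * d := by
  classical
  set N := L + 1 - d with hN
  set C := (Finset.range N).filter fun x => (x / d) % 2 = 1 with hC
  set X : Finset ℤ := (Finset.Ico (-p : ℤ) 0) ∪ C.image (fun x : ℕ => (x : ℤ)) with hX
  have d1 := posn_dist he hf hef
  have d2 := posn_dist he hg heg
  have hXm : ∀ x ∈ X, -(p : ℤ) ≤ x ∧ x + d ≤ L ∧
      (x < 0 ∨ (d ≤ x ∧ (x.toNat / d) % 2 = 1)) := by
    intro x hx
    simp only [hX, hC, mem_union, mem_Ico, mem_image, mem_filter, mem_range] at hx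
    rcases hx with ⟨h1, h2⟩ | ⟨y, ⟨h1, h2⟩, rfl⟩
    · omega
    · have : d ≤ y := by
        by_contra hlt
        rw [Nat.div_eq_of_lt (by omega)] at h2
        omega
      refine ⟨by omega, by omega, Or.inr ⟨by omega, ?_⟩⟩
      simpa using h2
  have hcard : X.card = p + C.card := by
    rw [hX, Finset.card_union_of_disjoint, Int.card_Ico, Finset.card_image_of_injective]
    · omega
    · exact Nat.cast_injective
    · rw [Finset.disjoint_left]
      intro x hx hx'
      simp only [mem_Ico, mem_image] at hx hx'
      obtain ⟨y, -, rfl⟩ := hx'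
      omega
  have hcount := count_odd_blocks d N hd
  rw [← hC] at hcount
  have key := homNumber_ge G X (posn e f) (fun x => posn e g (x + d)) ?_ ?_ ?_ ?_
  · rw [hcard] at key
    omega
  · intro x hx y hy hxy
    have hx := hXm x hx
    have hy := hXm y hy
    have := d1 x y (by omega) (by omega) (by omega) (by omega)
    rw [hxy, SimpleGraph.dist_self] at this
    have := abs_eq_zero.1 this.symm
    omega
  · intro x hx y hy hxy
    have hx := hXm x hx
    have hy := hXm y hy
    have := d2 (x + d) (y + d) (by omega) (by omega) (by omega) (by omega)
    simp only at hxy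
    rw [hxy, SimpleGraph.dist_self] at this
    have := abs_eq_zero.1 this.symm
    omega
  · intro x hx y hy
    have hx := hXm x hx
    have hy := hXm y hy
    zify
    rw [d1 x y (by omega) (by omega) (by omega) (by omega),
      d2 (x + d) (y + d) (by omega) (by omega) (by omega) (by omega)]
    congr 1; ring
  · intro x hx y hy hxy
    obtain ⟨x1, x2, x3⟩ := hXm x hx
    obtain ⟨y1, y2, y3⟩ := hXm y hy
    have hz : G.dist (posn e f x) (posn e g (y + d)) = 0 := by
      rw [hxy, SimpleGraph.dist_self]
    unfold posn at hz
    split_ifs at hz with h1 h2 h2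
    · have hxy' : x = y + d := by
        rcases le_total x.toNat (y + d).toNat with hle | hle
        · rw [he _ _ hle (by omega)] at hz; omega
        · rw [SimpleGraph.dist_comm, he _ _ hle (by omega)] at hz; omega
      subst hxy'
      rcases x3 with x3 | ⟨x3, x4⟩
      · omega
      rcases y3 with y3 | ⟨y3, y4⟩
      · omega
      have : (y + d).toNat = y.toNat + d := by omega
      rw [this, Nat.add_div_right _ (by omega)] at x4
      omega
    · rw [heg _ _ (by omega) (by omega)] at hz; omega
    · rw [hef.symm _ _ (by omega) (by omega)] at hz; omega
    · rw [hfg _ _ (by omega) (by omega)] at hz; omega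

lemma sorted_bound {V : Type*} [Fintype V] {G : SimpleGraph V} (hG : G.Connected)
    {e f g : ℕ → V} {a b c : ℕ}
    (he : Sg G e a) (hf : Sg G f b) (hg : Sg G g c)
    (hef : Pr G e a f b) (heg : Pr G e a g c) (hfg : Pr G f b g c)
    (hab : b ≤ a) (hbc : c ≤ b) :
    5 * (a + b + c + 1) ≤ 12 * homNumber G + 12 := by
  have h0 := path_bound he hf hef
  by_cases hc : 6 * c ≤ a + b + c + 1 + 6
  · omega
  by_cases h : a - b ≤ b - c
  · by_cases h1 : a = b
    · have := spider_bound hG hg he hf heg.symm hfg.symm hef 1 le_rfl (by omega) (by omega)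
      omega
    · have := spider_bound hG hg he hf heg.symm hfg.symm hef (a - b) (by omega) (by omega)
        (by omega)
      omega
  · by_cases h1 : b = c
    · have := spider_bound hG he hf hg hef heg hfg 1 le_rfl (by omega) (by omega)
      omega
    · have := spider_bound hG he hf hg hef heg hfg (b - c) (by omega) (by omega) (by omega)
      omega

/-- For every spider `T` on `n` vertices with exactly `3` legs, `h(T) ≥ 5n/12 − 1`. -/
theorem stmt8 {V : Type*} [Fintype V] (G : SimpleGraph V) [DecidableRel G.Adj] (v : V)
    (hS : IsSpider G v 3) (n : ℕ) (hn : Fintype.card V = n) :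
    5 * (n : ℝ) / 12 - 1 ≤ homNumber G := by
  obtain ⟨e, f, g, a, b, c, h1, h2, h3, h12, h13, h23, hcard⟩ := spider_legs G v hS
  have hG : G.Connected := hS.1.connected
  have key : 5 * (a + b + c + 1) ≤ 12 * homNumber G + 12 := by
    rcases le_total a b with hab | hab <;> rcases le_total b c with hbc | hbc <;>
      rcases le_total a c with hac | hac
    · have := sorted_bound hG h3 h2 h1 h23.symm h13.symm h12.symm (by omega) (by omega)
      omega
    · have := sorted_bound hG h3 h2 h1 h23.symm h13.symm h12.symm (by omega) (by omega)
      omega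
    · have := sorted_bound hG h2 h3 h1 h23 h12.symm h13.symm (by omega) (by omega)
      omega
    · have := sorted_bound hG h2 h1 h3 h12.symm h23 h13 (by omega) (by omega)
      omega
    · have := sorted_bound hG h3 h1 h2 h13.symm h23.symm h12 (by omega) (by omega)
      omega
    · have := sorted_bound hG h1 h3 h2 h13 h12 h23.symm (by omega) (by omega)
      omega
    · have := sorted_bound hG h1 h2 h3 h12 h13 h23 (by omega) (by omega)
      omega
    · have := sorted_bound hG h1 h2 h3 h12 h13 h23 (by omega) (by omega)
      omega
  rw [← hcard, hn] at key
  have key' : (5 : ℝ) * n ≤ 12 * homNumber G + 12 := by exact_mod_cast key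
  linarith
end

section
/- For every integer k ≥ 5 and every spider T on n vertices with exactly k legs, h(T) ≥ (k − 1)(n − 1)/(4k − 6); in particular h(T) ≥ (1/4 + 1/(8k − 12))·n − 1. -/
open Finset

theorem homometric_of_maps {V α : Type*} [DecidableEq V] (G : SimpleGraph V) (I : Finset α)
    (e₁ e₂ : α → V)
    (h1 : ∀ a ∈ I, ∀ b ∈ I, e₁ a = e₁ b → a = b) (h2 : ∀ a ∈ I, ∀ b ∈ I, e₂ a = e₂ b → a = b)
    (hdis : ∀ a ∈ I, ∀ b ∈ I, e₁ a ≠ e₂ b)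
    (hd : ∀ a ∈ I, ∀ b ∈ I, G.dist (e₁ a) (e₁ b) = G.dist (e₂ a) (e₂ b)) :
    Homometric G (I.image e₁) (I.image e₂) := by
  classical
  have key : ∀ e : α → V, (∀ a ∈ I, ∀ b ∈ I, e a = e b → a = b) →
      distMultiset G (I.image e) = (I.sym2.filter fun p => ¬ p.IsDiag).val.map
        (Sym2.lift ⟨fun a b => G.dist (e a) (e b), fun _ _ => SimpleGraph.dist_comm⟩) := by
    intro e he
    symm
    unfold distMultiset
    refine Multiset.map_eq_map_of_bij_of_nodup _ _ (Finset.nodup _) (Finset.nodup _)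
      (fun p _ => p.map e) ?_ ?_ ?_ ?_
    · intro p hp
      induction p using Sym2.ind with | _ a b =>
      simp only [Finset.mem_val, Finset.mem_filter, Finset.mk_mem_sym2_iff, Sym2.mk_isDiag_iff,
        Sym2.map_mk] at hp ⊢
      obtain ⟨⟨ha, hb⟩, hab⟩ := hp
      exact ⟨⟨Finset.mem_image_of_mem _ ha, Finset.mem_image_of_mem _ hb⟩,
        fun h => hab (he a ha b hb h)⟩
    · intro p hp q hq
      induction p using Sym2.ind with | _ a b =>
      induction q using Sym2.ind with | _ c d =>
      simp only [Finset.mem_val, Finset.mem_filter, Finset.mk_mem_sym2_iff, Sym2.mk_isDiag_iff,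
        Sym2.map_mk, Sym2.eq_iff] at hp hq ⊢
      obtain ⟨⟨ha, hb⟩, -⟩ := hp
      obtain ⟨⟨hc, hd⟩, -⟩ := hq
      rintro (⟨x, y⟩ | ⟨x, y⟩)
      · exact Or.inl ⟨he _ ha _ hc x, he _ hb _ hd y⟩
      · exact Or.inr ⟨he _ ha _ hd x, he _ hb _ hc y⟩
    · intro q hq
      induction q using Sym2.ind with | _ c d =>
      simp only [Finset.mem_val, Finset.mem_filter, Finset.mk_mem_sym2_iff, Sym2.mk_isDiag_iff,
        Finset.mem_image] at hq
      obtain ⟨⟨⟨a, ha, rfl⟩, ⟨b, hb, rfl⟩⟩, hab⟩ := hq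
      refine ⟨s(a, b), ?_, by simp⟩
      simp only [Finset.mem_val, Finset.mem_filter, Finset.mk_mem_sym2_iff, Sym2.mk_isDiag_iff]
      exact ⟨⟨ha, hb⟩, fun h => hab (by rw [h])⟩
    · intro p hp
      induction p using Sym2.ind with | _ a b =>
      simp
  refine ⟨?_, ?_⟩
  · rw [Finset.disjoint_left]
    intro x hx hy
    obtain ⟨a, ha, rfl⟩ := Finset.mem_image.1 hx
    obtain ⟨b, hb, hab⟩ := Finset.mem_image.1 hy
    exact hdis a ha b hb hab.symm
  · rw [key e₁ h1, key e₂ h2]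
    refine Multiset.map_congr rfl ?_
    intro p hp
    induction p using Sym2.ind with | _ a b =>
    simp only [Finset.mem_val, Finset.mem_filter, Finset.mk_mem_sym2_iff] at hp
    simpa using hd a hp.1.1 b hp.1.2

theorem card_le_homNumber {V α : Type*} [Fintype V] (G : SimpleGraph V) (I : Finset α)
    (e₁ e₂ : α → V)
    (h1 : ∀ a ∈ I, ∀ b ∈ I, e₁ a = e₁ b → a = b) (h2 : ∀ a ∈ I, ∀ b ∈ I, e₂ a = e₂ b → a = b)
    (hdis : ∀ a ∈ I, ∀ b ∈ I, e₁ a ≠ e₂ b)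
    (hd : ∀ a ∈ I, ∀ b ∈ I, G.dist (e₁ a) (e₁ b) = G.dist (e₂ a) (e₂ b)) :
    I.card ≤ homNumber G := by
  classical
  unfold homNumber
  refine le_csSup ⟨Fintype.card V, ?_⟩ ⟨I.image e₁, I.image e₂,
    homometric_of_maps G I e₁ e₂ h1 h2 hdis hd, ?_, ?_⟩
  · rintro h ⟨S₁, S₂, -, rfl, -⟩
    exact Finset.card_le_univ _
  · exact Finset.card_image_of_injOn (fun a ha b hb => h1 a ha b hb)
  · exact Finset.card_image_of_injOn (fun a ha b hb => h2 a ha b hb)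

theorem lip_le {V : Type*} (G : SimpleGraph V) (φ : V → ℤ)
    (h : ∀ x y, G.Adj x y → φ y ≤ φ x + 1) {u w : V} (p : G.Walk u w) :
    φ w ≤ φ u + p.length := by
  induction p with
  | nil => simp
  | cons hadj p ih =>
    have := h _ _ hadj
    simp only [SimpleGraph.Walk.length_cons]
    push_cast
    omega

theorem mem_of_lt_card (s : Finset ℕ) (h0 : 0 ∉ s) (hs : ∀ j, j + 1 ∈ s → j ≠ 0 → j ∈ s)
    (i : ℕ) (hi : i < s.card) : i + 1 ∈ s := by
  by_contra hc
  have hall : ∀ j, i + 1 ≤ j → j ∉ s := by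
    intro j hj
    induction j, hj using Nat.le_induction with
    | base => exact hc
    | succ j hj ih => exact fun h => ih (hs j h (by omega))
  have hsub : s ⊆ Finset.Icc 1 i := by
    intro j hj
    rw [Finset.mem_Icc]
    constructor
    · rcases Nat.eq_zero_or_pos j with rfl | h
      · exact absurd hj h0
      · exact h
    · by_contra h
      exact hall j (by omega) hj
  have := Finset.card_le_card hsub
  simp at this
  omega

theorem exists_parent {V : Type*} (G : SimpleGraph V) (hT : G.IsTree) (v : V) :
    ∃ par : V → V, (∀ u, u ≠ v → G.Adj (par u) u ∧ G.dist v u = G.dist v (par u) + 1) ∧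
      ∀ x y, G.Adj x y → (y ≠ v ∧ x = par y) ∨ (x ≠ v ∧ y = par x) := by
  have hex : ∀ u, ∃ p, u ≠ v → G.Adj p u ∧ G.dist v u = G.dist v p + 1 := by
    intro u
    by_cases hu : u = v
    · exact ⟨u, fun h => absurd hu h⟩
    obtain ⟨p, hp, hl⟩ := hT.connected.exists_path_of_dist v u
    have hnil : ¬ p.Nil := fun h => hu h.eq.symm
    have hadj := p.adj_penultimate hnil
    refine ⟨p.penultimate, fun _ => ⟨hadj, ?_⟩⟩
    have h1 := SimpleGraph.dist_le p.dropLast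
    have h2 : p.dropLast.length + 1 = p.length := by
      simpa using SimpleGraph.Walk.length_dropLast_add_one hnil
    have h3 := hT.connected.dist_triangle (u := v) (v := p.penultimate) (w := u)
    rw [SimpleGraph.dist_eq_one_iff_adj.2 hadj] at h3
    omega
  choose par hpar using hex
  have huniq : ∀ x y, G.Adj x y → G.dist v y = G.dist v x + 1 → y ≠ v ∧ x = par y := by
    intro x y hxy hd
    have hy : y ≠ v := by rintro rfl; simp at hd
    refine ⟨hy, ?_⟩
    obtain ⟨ha, hb⟩ := hpar y hy
    obtain ⟨p, hp⟩ := hT.connected.exists_walk_length_eq_dist v x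
    obtain ⟨q, hq⟩ := hT.connected.exists_walk_length_eq_dist v (par y)
    have h1 : (p.concat hxy).IsPath := SimpleGraph.Walk.isPath_of_length_eq_dist _ (by simp [hp, hd])
    have h2 : (q.concat ha).IsPath := SimpleGraph.Walk.isPath_of_length_eq_dist _ (by simp [hq, hb])
    have := (hT.existsUnique_path v y).unique h1 h2
    exact (SimpleGraph.Walk.concat_inj this).1
  refine ⟨par, hpar, fun x y hxy => ?_⟩
  rcases hT.dist_eq_dist_add_one_of_adj v hxy with h | h
  · exact Or.inr (huniq y x hxy.symm h)
  · exact Or.inl (huniq x y hxy h)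

theorem exists_legs {V : Type*} [Fintype V] (G : SimpleGraph V) [DecidableRel G.Adj] (v : V)
    (k : ℕ) (hS : IsSpider G v k) :
    ∃ leg : V → V, (∀ u, u ≠ v → G.Adj v (leg u)) ∧
      (∀ u, u ≠ v → G.dist v u ≠ 1 →
        ∃ p, p ≠ v ∧ leg p = leg u ∧ G.dist v u = G.dist v p + 1) ∧
      (∀ u w, u ≠ v → w ≠ v → leg u = leg w → G.dist v u = G.dist v w → u = w) ∧
      (∀ u w, u ≠ v → w ≠ v → leg u = leg w → ∀ n, G.dist v w = G.dist v u + n →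
        G.dist u w = n) ∧
      (∀ u w, u ≠ v → w ≠ v → leg u ≠ leg w → G.dist u w = G.dist v u + G.dist v w) := by
  classical
  obtain ⟨hT, hdeg, hdeg2⟩ := hS
  have hconn := hT.connected
  obtain ⟨par, hpar, hedge⟩ := exists_parent G hT v
  have hd0 : ∀ u, u ≠ v → 0 < G.dist v u := fun u hu => hconn.pos_dist_of_ne hu.symm
  have hvv : G.dist v v = 0 := SimpleGraph.dist_self
  obtain ⟨leg, hleg1, hleg2⟩ : ∃ leg : V → V, (∀ u, u ≠ v → par u = v → leg u = u) ∧
      (∀ u, u ≠ v → par u ≠ v → leg u = leg (par u)) := by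
    refine ⟨fun u => par^[G.dist v u - 1] u, ?_, ?_⟩
    · intro u hu hp
      have := (hpar u hu).2
      rw [hp, hvv] at this
      simp [this]
    · intro u hu hp
      have h1 := (hpar u hu).2
      have h2 := hd0 _ hp
      obtain ⟨m, hm⟩ : ∃ m, G.dist v (par u) = m + 1 := ⟨_, (Nat.succ_pred_eq_of_pos h2).symm⟩
      simp [h1, hm]
  have hN : ∀ n u, u ≠ v → G.dist v u = n → G.Adj v (leg u) := by
    intro n
    induction n with
    | zero => intro u hu h; have := hd0 u hu; omega
    | succ n ih =>
      intro u hu h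
      by_cases hp : par u = v
      · rw [hleg1 u hu hp]
        have := (hpar u hu).1
        rwa [hp] at this
      · rw [hleg2 u hu hp]
        exact ih _ hp (by have := (hpar u hu).2; omega)
  have hinj : ∀ n u w, u ≠ v → w ≠ v → leg u = leg w → G.dist v u = n → G.dist v w = n →
      u = w := by
    intro n
    induction n with
    | zero => intro u w hu _ _ h; have := hd0 u hu; omega
    | succ n ih =>
      intro u w hu hw hl h1 h2
      obtain ⟨au, du⟩ := hpar u hu
      obtain ⟨aw, dw⟩ := hpar w hw
      by_cases hp : par u = v
      · have hq : par w = v := by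
          by_contra hq
          have := hd0 _ hq
          rw [hp, hvv] at du
          omega
        rwa [hleg1 u hu hp, hleg1 w hw hq] at hl
      · have hq : par w ≠ v := by
          intro hq
          have := hd0 _ hp
          rw [hq, hvv] at dw
          omega
        rw [hleg2 u hu hp, hleg2 w hw hq] at hl
        have hx := ih _ _ hp hq hl (by omega) (by omega)
        by_contra huw
        have hdx := hdeg2 _ hp
        obtain ⟨ax, dx⟩ := hpar _ hp
        have hsub : ({par (par u), u, w} : Finset V) ⊆ G.neighborFinset (par u) := by
          intro z hz
          simp only [Finset.mem_insert, Finset.mem_singleton] at hz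
          rw [SimpleGraph.mem_neighborFinset]
          rcases hz with rfl | rfl | rfl
          · exact ax.symm
          · exact au
          · rw [hx]; exact aw
        have hc := Finset.card_le_card hsub
        rw [SimpleGraph.card_neighborFinset_eq_degree] at hc
        have h3 : ({par (par u), u, w} : Finset V).card = 3 := by
          rw [Finset.card_eq_three]
          refine ⟨_, _, _, ?_, ?_, huw, rfl⟩
          · intro h; rw [h] at dx; omega
          · intro h; rw [h] at dx; omega
        omega
  refine ⟨leg, fun u hu => hN _ u hu rfl, ?_, fun u w hu hw hl h => hinj _ u w hu hw hl rfl h.symm,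
    ?_, ?_⟩
  · intro u hu h1
    have hp : par u ≠ v := by
      intro hp
      have := (hpar u hu).2
      rw [hp, hvv] at this
      exact h1 this
    exact ⟨par u, hp, (hleg2 u hu hp).symm, (hpar u hu).2⟩
  · intro u w hu hw hl n hn
    have hup : ∀ n w, w ≠ v → leg u = leg w → G.dist v w = G.dist v u + n → G.dist u w ≤ n := by
      intro n
      induction n with
      | zero =>
        intro w hw hl h
        rw [hinj _ u w hu hw hl rfl h]
        simp
      | succ n ih =>
        intro w hw hl h
        obtain ⟨aw, dw⟩ := hpar w hw
        have hq : par w ≠ v := by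
          intro hq
          have := hd0 _ hu
          rw [hq, hvv] at dw
          omega
        have h1 := ih (par w) hq (by rw [hl, hleg2 w hw hq]) (by omega)
        have h2 := hconn.dist_triangle (u := u) (v := par w) (w := w)
        rw [SimpleGraph.dist_eq_one_iff_adj.2 aw] at h2
        omega
    have h1 := hup n w hw hl hn
    have h2 := hconn.dist_triangle (u := v) (v := u) (w := w)
    omega
  · intro u w hu hw hl
    have h1 := hconn.dist_triangle (u := u) (v := v) (w := w)
    rw [SimpleGraph.dist_comm (u := u) (v := v)] at h1
    obtain ⟨p, hp⟩ := hconn.exists_walk_length_eq_dist u w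
    let φ : V → ℤ := fun x => if x ≠ v ∧ leg x = leg u then (G.dist v u : ℤ) - G.dist v x
      else G.dist v u + G.dist v x
    have hφ : ∀ y, y ≠ v → φ y ≤ φ (par y) + 1 ∧ φ (par y) ≤ φ y + 1 := by
      intro y hy
      have dy := (hpar y hy).2
      by_cases hq : par y = v
      · simp only [φ, hq] at dy ⊢
        rw [hvv] at dy
        simp only [dy, hvv]
        rw [if_neg (fun h : v ≠ v ∧ leg v = leg u => h.1 rfl)]
        split_ifs
        · constructor <;> push_cast <;> linarith
        · constructor <;> push_cast <;> linarith
      · have := hleg2 y hy hq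
        simp only [φ, this, dy]
        by_cases hc : leg (par y) = leg u
        · rw [if_pos ⟨hy, hc⟩, if_pos ⟨hq, hc⟩]
          constructor <;> push_cast <;> linarith
        · rw [if_neg (fun h => hc h.2), if_neg (fun h => hc h.2)]
          constructor <;> push_cast <;> linarith
    have hlip : ∀ x y, G.Adj x y → φ y ≤ φ x + 1 := by
      intro x y hxy
      rcases hedge x y hxy with ⟨h, rfl⟩ | ⟨h, rfl⟩
      · exact (hφ y h).1
      · exact (hφ x h).2
    have := lip_le G φ hlip p
    have hu' : φ u = 0 := by simp [φ, hu]
    have hw' : φ w = G.dist v u + G.dist v w := by simp [φ, Ne.symm hl]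
    omega

theorem exists_coords {V : Type*} [Fintype V] (G : SimpleGraph V) [DecidableRel G.Adj] (v : V)
    (k : ℕ) (hS : IsSpider G v k) :
    ∃ (l : ℕ → ℕ) (P : ℕ → ℕ → V), Antitone l ∧ (∀ j, k ≤ j → l j = 0) ∧
      (∑ j ∈ Finset.range k, l j) + 1 = Fintype.card V ∧
      (∀ a i, i < l a → G.dist v (P a i) = i + 1) ∧
      (∀ a i n, i + n < l a → G.dist (P a i) (P a (i + n)) = n) ∧
      (∀ a b i j, a ≠ b → i < l a → j < l b → G.dist (P a i) (P b j) = i + j + 2) := by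
  classical
  obtain ⟨leg, hN, hdown, hinj, hsame, hdiff⟩ := exists_legs G v k hS
  have hconn := hS.1.connected
  let F : V → Finset V := fun a => Finset.univ.filter fun u => u ≠ v ∧ leg u = a
  have hF : ∀ a i, ∃ u, i < (F a).card → u ≠ v ∧ leg u = a ∧ G.dist v u = i + 1 := by
    intro a i
    by_cases hi : i < (F a).card
    swap
    · exact ⟨v, fun h => absurd h hi⟩
    have hc : ((F a).image fun u => G.dist v u).card = (F a).card := by
      apply Finset.card_image_of_injOn
      intro u hu w hw h
      simp only [F, Finset.coe_filter, Set.mem_ofPred_eq, Finset.mem_univ, true_and] at hu hw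
      exact hinj u w hu.1 hw.1 (hu.2.trans hw.2.symm) h
    have := mem_of_lt_card ((F a).image fun u => G.dist v u) ?_ ?_ i (by rw [hc]; exact hi)
    · obtain ⟨u, hu, h⟩ := Finset.mem_image.1 this
      simp only [F, Finset.mem_filter, Finset.mem_univ, true_and] at hu
      exact ⟨u, fun _ => ⟨hu.1, hu.2, h⟩⟩
    · intro h
      obtain ⟨u, hu, h⟩ := Finset.mem_image.1 h
      simp only [F, Finset.mem_filter, Finset.mem_univ, true_and] at hu
      have := hconn.pos_dist_of_ne hu.1.symm
      omega
    · intro j hj hj0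
      obtain ⟨u, hu, h⟩ := Finset.mem_image.1 hj
      simp only [F, Finset.mem_filter, Finset.mem_univ, true_and] at hu
      obtain ⟨p, hp, hl, hd⟩ := hdown u hu.1 (by omega)
      refine Finset.mem_image.2 ⟨p, ?_, by omega⟩
      simp only [F, Finset.mem_filter, Finset.mem_univ, true_and]
      exact ⟨hp, hl.trans hu.2⟩
  choose Q hQ using hF
  have hcard : Fintype.card (G.neighborFinset v) = k := by
    rw [Fintype.card_coe, SimpleGraph.card_neighborFinset_eq_degree, hS.2.1]
  let e : Fin k ≃ G.neighborFinset v := (Fintype.equivFinOfCardEq hcard).symm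
  let f : Fin k → ℕᵒᵈ := fun i => OrderDual.toDual (F (e i)).card
  let σ : Fin k ≃ G.neighborFinset v := (Tuple.sort f).trans e
  have hmono : ∀ i j : Fin k, i ≤ j → (F (σ j)).card ≤ (F (σ i)).card := by
    intro i j hij
    exact Tuple.monotone_sort f hij
  let l : ℕ → ℕ := fun j => if h : j < k then (F (σ ⟨j, h⟩)).card else 0
  let P : ℕ → ℕ → V := fun j i => if h : j < k then Q (σ ⟨j, h⟩) i else v
  have hP : ∀ a i, i < l a → ∃ h : a < k, P a i ≠ v ∧ leg (P a i) = σ ⟨a, h⟩ ∧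
      G.dist v (P a i) = i + 1 := by
    intro a i hi
    by_cases h : a < k
    · refine ⟨h, ?_⟩
      simp only [l, P, h, dif_pos] at hi ⊢
      exact hQ _ _ hi
    · simp [l, h] at hi
  refine ⟨l, P, ?_, ?_, ?_, ?_, ?_, ?_⟩
  · intro i j hij
    by_cases hj : j < k
    · have hi : i < k := by omega
      simp only [l, hi, hj, dif_pos]
      exact hmono _ _ hij
    · simp [l, hj]
  · intro j hj
    simp [l, Nat.not_lt.2 hj]
  · have h1 : ∑ j ∈ Finset.range k, l j = ∑ a ∈ G.neighborFinset v, (F a).card := by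
      rw [Finset.sum_range, ← Finset.sum_coe_sort (G.neighborFinset v), ← Equiv.sum_comp σ]
      refine Finset.sum_congr rfl fun i _ => ?_
      simp [l]
    have h2 := Finset.card_eq_sum_card_fiberwise (s := Finset.univ.erase v)
      (t := G.neighborFinset v) (f := leg) (by
        intro u hu
        simp only [Finset.coe_erase, Finset.coe_univ, Set.mem_sdiff, Set.mem_univ, true_and,
          Set.mem_singleton_iff] at hu
        simpa using hN u hu)
    rw [Finset.card_erase_of_mem (Finset.mem_univ _), Finset.card_univ] at h2
    have h3 : ∀ a, F a = (Finset.univ.erase v).filter (fun u => leg u = a) := by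
      intro a; ext u; simp [F]
    simp only [← h3] at h2
    have : 0 < Fintype.card V := Fintype.card_pos_iff.2 ⟨v⟩
    omega
  · intro a i hi
    exact (hP a i hi).2.2.2
  · intro a i n hi
    obtain ⟨h, a1, a2, a3⟩ := hP a i (by omega)
    obtain ⟨h, b1, b2, b3⟩ := hP a (i + n) hi
    exact hsame _ _ a1 b1 (a2.trans b2.symm) n (by omega)
  · intro a b i j hab hi hj
    obtain ⟨h, a1, a2, a3⟩ := hP a i hi
    obtain ⟨h', b1, b2, b3⟩ := hP b j hj
    rw [hdiff _ _ a1 b1, a3, b3]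
    · omega
    · rw [a2, b2]
      intro hc
      have := σ.injective (Subtype.ext hc)
      simp at this
      exact hab this

theorem bound_path {V : Type*} [Fintype V] (G : SimpleGraph V) (v : V)
    (l : ℕ → ℕ) (P : ℕ → ℕ → V)
    (hv : ∀ a i, i < l a → G.dist v (P a i) = i + 1)
    (hs : ∀ a i n, i + n < l a → G.dist (P a i) (P a (i + n)) = n)
    (hd : ∀ a b i j, a ≠ b → i < l a → j < l b → G.dist (P a i) (P b j) = i + j + 2) :
    (l 0 + l 1 + 1) / 2 ≤ homNumber G := by
  let Q : ℕ → V := fun i => if i < l 0 then P 0 (l 0 - 1 - i) else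
    if i = l 0 then v else P 1 (i - l 0 - 1)
  have hQ : ∀ i j, i ≤ j → j < l 0 + l 1 + 1 → G.dist (Q i) (Q j) = j - i := by
    intro i j hij hj
    simp only [Q]
    split_ifs with h1 h2 h3 h4 h5 h6 h7 h8
    · have := hs 0 (l 0 - 1 - j) (j - i) (by omega)
      rw [SimpleGraph.dist_comm]
      rwa [show l 0 - 1 - j + (j - i) = l 0 - 1 - i by omega] at this
    · rw [SimpleGraph.dist_comm, hv 0 _ (by omega)]; omega
    · rw [hd 0 1 _ _ (by omega) (by omega) (by omega)]; omega
    · omega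
    · simp; omega
    · rw [hv 1 _ (by omega)]; omega
    · omega
    · omega
    · have := hs 1 (i - l 0 - 1) (j - i) (by omega)
      rwa [show i - l 0 - 1 + (j - i) = j - l 0 - 1 by omega] at this
  have hQinj : ∀ i j, i < l 0 + l 1 + 1 → j < l 0 + l 1 + 1 → Q i = Q j → i = j := by
    intro i j hi hj h
    rcases le_total i j with hij | hij
    · have := hQ i j hij hj
      rw [h, SimpleGraph.dist_self] at this
      omega
    · have := hQ j i hij hi
      rw [h, SimpleGraph.dist_self] at this
      omega
  set m := (l 0 + l 1 + 1) / 2 with hm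
  have := card_le_homNumber G (Finset.range m) Q (fun i => Q (m + i)) ?_ ?_ ?_ ?_
  · simpa using this
  · intro a ha b hb h
    rw [Finset.mem_range] at ha hb
    exact hQinj a b (by omega) (by omega) h
  · intro a ha b hb h
    rw [Finset.mem_range] at ha hb
    have := hQinj _ _ (by omega) (by omega) h
    omega
  · intro a ha b hb h
    rw [Finset.mem_range] at ha hb
    have := hQinj _ _ (by omega) (by omega) h
    omega
  · intro a ha b hb
    rw [Finset.mem_range] at ha hb
    rcases le_total a b with hab | hab
    · rw [hQ a b hab (by omega), hQ (m + a) (m + b) (by omega) (by omega)]; omega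
    · rw [SimpleGraph.dist_comm, hQ b a hab (by omega), SimpleGraph.dist_comm,
        hQ (m + b) (m + a) (by omega) (by omega)]; omega

theorem bound_pairs {V : Type*} [Fintype V] (G : SimpleGraph V)
    (k : ℕ) (l : ℕ → ℕ) (P : ℕ → ℕ → V) (hl : Antitone l)
    (hs : ∀ a i n, i + n < l a → G.dist (P a i) (P a (i + n)) = n)
    (hd : ∀ a b i j, a ≠ b → i < l a → j < l b → G.dist (P a i) (P b j) = i + j + 2) :
    ∑ t ∈ Finset.range k, l (2 * t + 1) ≤ homNumber G := by
  have hinj : ∀ a b i j, i < l a → j < l b → P a i = P b j → a = b ∧ i = j := by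
    intro a b i j hi hj h
    by_cases hab : a = b
    · subst hab
      refine ⟨rfl, ?_⟩
      rcases le_total i j with hij | hij
      · obtain ⟨n, rfl⟩ := Nat.exists_eq_add_of_le hij
        have := hs a i n hj
        rw [← h, SimpleGraph.dist_self] at this
        omega
      · obtain ⟨n, rfl⟩ := Nat.exists_eq_add_of_le hij
        have := hs a j n hi
        rw [← h, SimpleGraph.dist_self] at this
        omega
    · have := hd a b i j hab hi hj
      rw [h, SimpleGraph.dist_self] at this
      omega
  have hle : ∀ t, l (2 * t + 1) ≤ l (2 * t) := fun t => hl (by omega)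
  have := card_le_homNumber G ((Finset.range k).sigma fun t => Finset.range (l (2 * t + 1)))
    (fun x => P (2 * x.1) x.2) (fun x => P (2 * x.1 + 1) x.2) ?_ ?_ ?_ ?_
  · simpa using this
  · rintro ⟨t, i⟩ hi ⟨s, j⟩ hj h
    simp only [Finset.mem_sigma, Finset.mem_range] at hi hj h
    obtain ⟨h1, h2⟩ := hinj _ _ _ _ (hi.2.trans_le (hle t)) (hj.2.trans_le (hle s)) h
    obtain rfl : t = s := by omega
    rw [h2]
  · rintro ⟨t, i⟩ hi ⟨s, j⟩ hj h
    simp only [Finset.mem_sigma, Finset.mem_range] at hi hj h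
    obtain ⟨h1, h2⟩ := hinj _ _ _ _ hi.2 hj.2 h
    obtain rfl : t = s := by omega
    rw [h2]
  · rintro ⟨t, i⟩ hi ⟨s, j⟩ hj h
    simp only [Finset.mem_sigma, Finset.mem_range] at hi hj h
    obtain ⟨h1, h2⟩ := hinj _ _ _ _ (hi.2.trans_le (hle t)) hj.2 h
    omega
  · rintro ⟨t, i⟩ hi ⟨s, j⟩ hj
    simp only [Finset.mem_sigma, Finset.mem_range] at hi hj ⊢
    by_cases hts : t = s
    · subst hts
      have h1 := hle t
      rcases le_total i j with hij | hij
      · obtain ⟨n, rfl⟩ := Nat.exists_eq_add_of_le hij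
        rw [hs _ _ _ hj.2, hs _ _ _ (by omega)]
      · obtain ⟨n, rfl⟩ := Nat.exists_eq_add_of_le hij
        rw [SimpleGraph.dist_comm, hs _ _ _ (by omega), SimpleGraph.dist_comm, hs _ _ _ hi.2]
    · rw [hd _ _ _ _ (by omega) (hi.2.trans_le (hle t)) (hj.2.trans_le (hle s)),
        hd _ _ _ _ (by omega) hi.2 hj.2]

theorem sum_two_mul (l : ℕ → ℕ) (hl : Antitone l) (k : ℕ) :
    ∑ j ∈ Finset.range (2 * k + 1), l j ≤ l 0 + 2 * ∑ t ∈ Finset.range k, l (2 * t + 1) := by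
  induction k with
  | zero => simp
  | succ k ih =>
    rw [show 2 * (k + 1) + 1 = 2 * k + 1 + 1 + 1 by ring, Finset.sum_range_succ,
      Finset.sum_range_succ, Finset.sum_range_succ (fun t => l (2 * t + 1)) k]
    have : l (2 * k + 2) ≤ l (2 * k + 1) := hl (by omega)
    omega

theorem sum_le_first (l : ℕ → ℕ) (hl : Antitone l) (k : ℕ) :
    ∑ j ∈ Finset.range (k + 1), l j ≤ l 0 + k * l 1 := by
  rw [Finset.sum_range_succ', add_comm]
  have : ∑ j ∈ Finset.range k, l (j + 1) ≤ ∑ j ∈ Finset.range k, l 1 :=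
    Finset.sum_le_sum fun j _ => hl (by omega)
  simp at this
  omega

/-- For every `k ≥ 5` and every spider `T` on `n` vertices with exactly `k` legs,
`h(T) ≥ (k − 1)(n − 1)/(4k − 6)`; in particular `h(T) ≥ (1/4 + 1/(8k − 12))·n − 1`. -/
theorem stmt10 {V : Type*} [Fintype V] (G : SimpleGraph V) [DecidableRel G.Adj] (v : V)
    (k : ℕ) (hk : 5 ≤ k) (hS : IsSpider G v k) (n : ℕ) (hn : Fintype.card V = n) :
    ((k : ℝ) - 1) * ((n : ℝ) - 1) / (4 * (k : ℝ) - 6) ≤ homNumber G ∧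
      ((1 / 4 : ℝ) + 1 / (8 * (k : ℝ) - 12)) * (n : ℝ) - 1 ≤ homNumber G := by
  obtain ⟨l, P, hl, hz, hsum, hv, hs, hd⟩ := exists_coords G v k hS
  have hA := bound_path G v l P hv hs hd
  have hB := bound_pairs G k l P hl hs hd
  have h1 := sum_two_mul l hl k
  have hsub : ∑ j ∈ Finset.range k, l j ≤ ∑ j ∈ Finset.range (2 * k + 1), l j :=
    Finset.sum_le_sum_of_subset (Finset.range_subset_range.2 (by omega))
  obtain ⟨q, rfl⟩ : ∃ q, k = q + 1 := ⟨k - 1, by omega⟩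
  have h2 := sum_le_first l hl q
  set m := ∑ j ∈ Finset.range (q + 1), l j
  set H := homNumber G
  have e1 : m ≤ l 0 + 2 * H := by omega
  have e2 : l 0 + l 1 ≤ 2 * H := by omega
  have hn1 : (n : ℝ) = m + 1 := by rw [← hn, ← hsum]; push_cast; ring
  have r1 : (m : ℝ) ≤ l 0 + 2 * H := by exact_mod_cast e1
  have r2 : (l 0 : ℝ) + l 1 ≤ 2 * H := by exact_mod_cast e2
  have r3 : (m : ℝ) ≤ l 0 + q * l 1 := by exact_mod_cast h2
  have hq : (4 : ℝ) ≤ q := by exact_mod_cast (by omega : 4 ≤ q)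
  have main : (q : ℝ) * m ≤ H * (4 * q - 2) := by
    nlinarith
  have first : (((q + 1 : ℕ) : ℝ) - 1) * ((n : ℝ) - 1) / (4 * ((q + 1 : ℕ) : ℝ) - 6) ≤ H := by
    push_cast
    rw [hn1, div_le_iff₀ (by linarith)]
    nlinarith
  refine ⟨first, le_trans ?_ first⟩
  push_cast
  rw [hn1]
  have ha : (0 : ℝ) < 4 * q - 2 := by linarith
  have hc : (1 / 4 : ℝ) + 1 / (8 * ((q : ℝ) + 1) - 12) = q / (4 * q - 2) := by
    rw [show 8 * ((q : ℝ) + 1) - 12 = 2 * (4 * q - 2) by ring]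
    field_simp
    ring
  have hc1 : (q : ℝ) / (4 * q - 2) ≤ 1 := by
    rw [div_le_one ha]; linarith
  rw [hc]
  have : ((q : ℝ) + 1 - 1) * ((m : ℝ) + 1 - 1) / (4 * ((q : ℝ) + 1) - 6) =
      q / (4 * q - 2) * m := by
    rw [show 4 * ((q : ℝ) + 1) - 6 = 4 * q - 2 by ring]
    ring
  rw [this]
  linarith
end

section
/- For every α > 0 and every ε > 0 there exists N = N(α, ε) such that for all n > N the following holds: if G is a connected graph on n vertices with diameter 2 whose number of edges is either at most n^(2−α) or at least C(n,2) − n^(2−α), then h(G) ≥ n/2 − εn. -/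
open Finset

open Classical in
/-- Number of neighbours of `x` inside `U`. -/
noncomputable def dg {V : Type} (H : SimpleGraph V) (U : Finset V) (x : V) : ℕ :=
  (U.filter (fun y => H.Adj x y)).card

lemma sum_dg_symm {V : Type} (H : SimpleGraph V) (A B : Finset V) :
    ∑ x ∈ A, dg H B x = ∑ y ∈ B, dg H A y := by
  classical
  unfold dg
  simp only [Finset.card_filter]
  rw [Finset.sum_comm]
  simp only [H.adj_comm]

lemma dg_union {V : Type} [DecidableEq V] (H : SimpleGraph V) {A B : Finset V} (h : Disjoint A B)
    (x : V) : dg H (A ∪ B) x = dg H A x + dg H B x := by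
  classical
  unfold dg
  rw [Finset.filter_union, Finset.card_union_of_disjoint]
  exact Finset.disjoint_filter_filter h

open Classical in
lemma sum_dg_self {V : Type} [Fintype V] (H : SimpleGraph V) (A : Finset V) :
    ∑ x ∈ A, dg H A x =
      2 * ((A.sym2.filter (fun p => ¬ p.IsDiag)).filter (fun p => p ∈ H.edgeSet)).card := by
  let K : SimpleGraph V :=
    { Adj := fun x y => H.Adj x y ∧ x ∈ A ∧ y ∈ A
      symm := ⟨fun x y h => ⟨h.1.symm, h.2.2, h.2.1⟩⟩
      loopless := ⟨fun x h => H.loopless.irrefl x h.1⟩ }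
  have h1 := K.sum_degrees_eq_twice_card_edges
  have h2 : K.edgeFinset =
      ((A.sym2.filter (fun p => ¬ p.IsDiag)).filter (fun p => p ∈ H.edgeSet)) := by
    ext p
    induction p with
    | _ x y =>
      simp only [SimpleGraph.mem_edgeFinset, SimpleGraph.mem_edgeSet, Finset.mem_filter,
        Finset.mk_mem_sym2_iff, Sym2.mk_isDiag_iff, K]
      constructor
      · rintro ⟨h, hx, hy⟩
        exact ⟨⟨⟨hx, hy⟩, h.ne⟩, h⟩
      · rintro ⟨⟨⟨hx, hy⟩, -⟩, h⟩
        exact ⟨h, hx, hy⟩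
  rw [← h2, ← h1, ← Finset.sum_subset (Finset.subset_univ A)]
  · apply Finset.sum_congr rfl
    intro x hx
    unfold dg
    rw [← SimpleGraph.card_neighborFinset_eq_degree]
    congr 1
    ext y
    simp only [Finset.mem_filter, SimpleGraph.mem_neighborFinset, K]
    tauto
  · intro x _ hx
    rw [← SimpleGraph.card_neighborFinset_eq_degree, Finset.card_eq_zero]
    ext y
    simp only [SimpleGraph.mem_neighborFinset, K]
    simp [hx]

open Classical in
lemma distMultiset_eq {V : Type} [Fintype V] (G H : SimpleGraph V) (a b : ℕ)
    (hd : ∀ x y, x ≠ y → G.dist x y = if H.Adj x y then a else b) (S : Finset V) (e : ℕ)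
    (he : ∑ x ∈ S, dg H S x = 2 * e) :
    distMultiset G S = Multiset.replicate e a + Multiset.replicate (S.card.choose 2 - e) b := by
  rw [sum_dg_self] at he
  have he' : ((S.sym2.filter (fun p => ¬ p.IsDiag)).filter (fun p => p ∈ H.edgeSet)).card = e := by
    omega
  have hc : (S.sym2.filter (fun p => ¬ p.IsDiag)).card = S.card.choose 2 := by
    have := Sym2.card_image_offDiag S
    rw [← this]
    congr 1
    ext p
    induction p with
    | _ x y =>
      simp only [Finset.mem_filter, Finset.mk_mem_sym2_iff, Sym2.mk_isDiag_iff,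
        Finset.mem_image, Finset.mem_offDiag, Prod.exists, Function.uncurry_apply_pair, Sym2.eq_iff]
      constructor
      · rintro ⟨⟨hx, hy⟩, h⟩
        exact ⟨x, y, ⟨hx, hy, h⟩, Or.inl ⟨rfl, rfl⟩⟩
      · rintro ⟨p, q, ⟨hp, hq, h⟩, (⟨rfl, rfl⟩ | ⟨rfl, rfl⟩)⟩
        · exact ⟨⟨hp, hq⟩, h⟩
        · exact ⟨⟨hq, hp⟩, Ne.symm h⟩
  have key : distMultiset G S = (S.sym2.filter (fun p => ¬ p.IsDiag)).val.map
      (fun p => if p ∈ H.edgeSet then a else b) := by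
    unfold distMultiset
    have hdec : (Classical.decEq V) = (fun a b => Classical.propDecidable (a = b)) :=
      Subsingleton.elim _ _
    have : ∀ p ∈ (S.sym2.filter (fun p => ¬ p.IsDiag)).val,
      (Sym2.lift ⟨fun a b => G.dist a b, fun _ _ => SimpleGraph.dist_comm⟩ : Sym2 V → ℕ) p
        = if p ∈ H.edgeSet then a else b := by
      intro p hp
      rw [Finset.mem_val, Finset.mem_filter] at hp
      induction p with
      | _ x y =>
        have := hd x y (by simpa using hp.2)
        simpa using this
    rw [← Multiset.map_congr rfl this]
  rw [key]
  have h3 := Finset.card_filter_add_card_filter_not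
    (s := S.sym2.filter (fun p => ¬ p.IsDiag)) (fun p => p ∈ H.edgeSet)
  set T := S.sym2.filter (fun p => ¬ p.IsDiag) with hT
  rw [← Multiset.filter_add_not (fun p => p ∈ H.edgeSet) T.val, Multiset.map_add]
  congr 1
  · rw [Multiset.eq_replicate]
    refine ⟨?_, ?_⟩
    · rw [Multiset.card_map, ← he']; rfl
    · intro x hx
      rw [Multiset.mem_map] at hx
      obtain ⟨p, hp, rfl⟩ := hx
      rw [if_pos (Multiset.mem_filter.1 hp).2]
  · rw [Multiset.eq_replicate]
    refine ⟨?_, ?_⟩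
    · rw [Multiset.card_map]
      have : Multiset.card (Multiset.filter (fun p => ¬ p ∈ H.edgeSet) T.val)
        = (T.filter (fun p => ¬ p ∈ H.edgeSet)).card := rfl
      rw [this]; omega
    · intro x hx
      rw [Multiset.mem_map] at hx
      obtain ⟨p, hp, rfl⟩ := hx
      rw [if_neg (Multiset.mem_filter.1 hp).2]

lemma le_homNumber_s13 {V : Type} [Fintype V] (G : SimpleGraph V) (A B : Finset V)
    (h : Homometric G A B) (hc : A.card = B.card) : A.card ≤ homNumber G := by
  unfold homNumber
  apply le_csSup
  · refine ⟨Fintype.card V, ?_⟩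
    rintro h ⟨S, T, -, rfl, -⟩
    exact Finset.card_le_univ S
  · exact ⟨A, B, h, rfl, hc.symm⟩

open Classical in
lemma le_homNumber_of {V : Type} [Fintype V] (G H : SimpleGraph V) (a b : ℕ)
    (hd : ∀ x y, x ≠ y → G.dist x y = if H.Adj x y then a else b) (A B : Finset V)
    (hAB : Disjoint A B) (hc : A.card = B.card)
    (hs : ∑ x ∈ A, dg H (A ∪ B) x = ∑ x ∈ B, dg H (A ∪ B) x) : A.card ≤ homNumber G := by
  apply le_homNumber_s13 G A B _ hc
  refine ⟨hAB, ?_⟩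
  simp only [dg_union H hAB, Finset.sum_add_distrib] at hs
  rw [sum_dg_symm H A B] at hs
  have hB := sum_dg_self H B
  rw [distMultiset_eq G H a b hd A _ (by rw [← hB]; omega),
    distMultiset_eq G H a b hd B _ hB, hc]

lemma split_step {V : Type} [DecidableEq V] (d : V → ℤ) (A B : Finset V) (hAB : Disjoint A B)
    (hc : A.card = B.card) (x y : V) (hxy : x ≠ y) (hx : x ∉ A ∪ B) (hy : y ∉ A ∪ B) :
    ∃ A' B' : Finset V, Disjoint A' B' ∧ A'.card = B'.card ∧
      A' ∪ B' = insert x (insert y (A ∪ B)) ∧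
      |∑ v ∈ A', d v - ∑ v ∈ B', d v| = abs (abs (∑ v ∈ A, d v - ∑ v ∈ B, d v) - abs (d x - d y)) := by
  wlog h : 0 ≤ (∑ v ∈ A, d v - ∑ v ∈ B, d v) * (d y - d x) generalizing x y
  · obtain ⟨A', B', h1, h2, h3, h4⟩ := this y x hxy.symm hy hx (by linarith)
    refine ⟨A', B', h1, h2, ?_, ?_⟩
    · rw [h3, Finset.insert_comm]
    · rw [h4, abs_sub_comm (d y) (d x)]
  rw [Finset.mem_union, not_or] at hx hy
  refine ⟨insert x A, insert y B, ?_, ?_, ?_, ?_⟩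
  · rw [Finset.disjoint_insert_left, Finset.disjoint_insert_right]
    refine ⟨?_, hy.1, hAB⟩
    rw [Finset.mem_insert, not_or]
    exact ⟨hxy, hx.2⟩
  · rw [Finset.card_insert_of_notMem hx.1, Finset.card_insert_of_notMem hy.2, hc]
  · ext v; simp only [Finset.mem_union, Finset.mem_insert]; tauto
  · rw [Finset.sum_insert hx.1, Finset.sum_insert hy.2]
    generalize (∑ v ∈ A, d v) = a at *
    generalize (∑ v ∈ B, d v) = b at *
    generalize d x = p at *
    generalize d y = q at *
    rcases mul_nonneg_iff.1 h with ⟨h1, h2⟩ | ⟨h1, h2⟩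
    · rw [abs_of_nonneg h1, abs_sub_comm p q, abs_of_nonneg h2]
      congr 1; ring
    · rw [abs_of_nonpos h1, abs_sub_comm p q, abs_of_nonpos h2, abs_sub_comm]
      congr 1; ring

lemma split_base {V : Type} [DecidableEq V] (d : V → ℤ) (D : ℤ) (hD : 0 ≤ D) (n : ℕ) :
    ∀ R : Finset V, R.card = 2 * n → (∀ x ∈ R, 0 ≤ d x ∧ d x ≤ D) →
    ∃ A B : Finset V, Disjoint A B ∧ A.card = B.card ∧ A ∪ B = R ∧
      |∑ v ∈ A, d v - ∑ v ∈ B, d v| ≤ D := by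
  induction n with
  | zero =>
    intro R hR _
    have : R = ∅ := by simpa using hR
    subst this
    exact ⟨∅, ∅, by simp, rfl, by simp, by simpa using hD⟩
  | succ n ih =>
    intro R hR hd
    obtain ⟨x, hx, y, hy, hxy⟩ := Finset.one_lt_card.1 (by omega : 1 < R.card)
    have hy' : y ∈ R.erase x := Finset.mem_erase.2 ⟨hxy.symm, hy⟩
    obtain ⟨A, B, h1, h2, h3, h4⟩ := ih ((R.erase x).erase y)
      (by rw [Finset.card_erase_of_mem hy', Finset.card_erase_of_mem hx]; omega)
      (fun z hz => hd z (Finset.mem_of_mem_erase (Finset.mem_of_mem_erase hz)))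
    obtain ⟨A', B', g1, g2, g3, g4⟩ := split_step d A B h1 h2 x y hxy (by simp [h3]) (by simp [h3])
    refine ⟨A', B', g1, g2, ?_, ?_⟩
    · rw [g3, h3, Finset.insert_erase hy', Finset.insert_erase hx]
    · rw [g4, abs_le]
      have a1 := abs_nonneg (∑ v ∈ A, d v - ∑ v ∈ B, d v)
      have a2 := abs_nonneg (d x - d y)
      have a3 : |d x - d y| ≤ D := by
        rw [abs_le]; have := hd x hx; have := hd y hy; constructor <;> linarith
      constructor <;> linarith

/-- `F` is a set of vertex-disjoint pairs inside `W`, all satisfying `P`. -/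
def IsMat {V : Type} (P : V → V → Prop) (W : Finset V) (F : Finset (V × V)) : Prop :=
  (∀ e ∈ F, e.1 ∈ W ∧ e.2 ∈ W ∧ e.1 ≠ e.2 ∧ P e.1 e.2) ∧
  ∀ e ∈ F, ∀ e' ∈ F, e ≠ e' → e.1 ≠ e'.1 ∧ e.1 ≠ e'.2 ∧ e.2 ≠ e'.1 ∧ e.2 ≠ e'.2

open Classical in
/-- Vertices covered by `F`. -/
noncomputable def supp {V : Type} (F : Finset (V × V)) : Finset V :=
  F.biUnion (fun e => {e.1, e.2})

lemma mem_supp {V : Type} (F : Finset (V × V)) (x : V) :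
    x ∈ supp F ↔ ∃ e ∈ F, x = e.1 ∨ x = e.2 := by
  simp [supp]

lemma card_supp_le {V : Type} (F : Finset (V × V)) : (supp F).card ≤ 2 * F.card := by
  classical
  unfold supp
  rw [mul_comm]
  apply Finset.card_biUnion_le_card_mul
  intro e _
  exact Finset.card_le_two

lemma card_supp {V : Type} {P : V → V → Prop} {W : Finset V} {F : Finset (V × V)}
    (hF : IsMat P W F) : (supp F).card = 2 * F.card := by
  classical
  unfold supp
  rw [Finset.card_biUnion, mul_comm, ← smul_eq_mul, ← Finset.sum_const]
  · apply Finset.sum_congr rfl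
    intro e he
    exact Finset.card_pair (hF.1 e he).2.2.1
  · intro e he e' he' hee
    have := hF.2 e he e' he' hee
    rw [Function.onFun, Finset.disjoint_left]
    intro x hx hx'
    simp only [Finset.mem_insert, Finset.mem_singleton] at hx hx'
    rcases hx with rfl | rfl <;> rcases hx' with h | h <;> simp_all

lemma exists_maxMat {V : Type} [Fintype V] (P : V → V → Prop) (W : Finset V) :
    ∃ F, IsMat P W F ∧ ∀ x ∈ W, ∀ y ∈ W, x ∉ supp F → y ∉ supp F → x ≠ y → ¬ P x y := by
  classical
  have hne : ((Finset.univ : Finset (Finset (V × V))).filter (fun F => IsMat P W F)).Nonempty :=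
    ⟨∅, by simp [IsMat]⟩
  obtain ⟨F, hF, hmax⟩ := Finset.exists_max_image _ Finset.card hne
  rw [Finset.mem_filter] at hF
  refine ⟨F, hF.2, ?_⟩
  intro x hx y hy hxF hyF hxy hP
  simp only [mem_supp, not_exists, not_and, not_or] at hxF hyF
  have hn : (x, y) ∉ F := fun h => (hxF _ h).1 rfl
  have := hmax (insert (x, y) F) (by
    rw [Finset.mem_filter]
    refine ⟨Finset.mem_univ _, ?_, ?_⟩
    · intro e he
      rcases Finset.mem_insert.1 he with rfl | he
      · exact ⟨hx, hy, hxy, hP⟩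
      · exact hF.2.1 e he
    · intro e he e' he' hee
      rcases Finset.mem_insert.1 he with rfl | he <;> rcases Finset.mem_insert.1 he' with rfl | he'
      · exact absurd rfl hee
      · exact ⟨(hxF _ he').1, (hxF _ he').2, (hyF _ he').1, (hyF _ he').2⟩
      · exact ⟨Ne.symm (hxF _ he).1, Ne.symm (hyF _ he).1, Ne.symm (hxF _ he).2,
          Ne.symm (hyF _ he).2⟩
      · exact hF.2.2 e he e' he' hee)
  rw [Finset.card_insert_of_notMem hn] at this
  omega

lemma split_units {V : Type} [DecidableEq V] (d : V → ℤ) (D : ℤ) (R : Finset V)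
    (hR : ∃ A B : Finset V, Disjoint A B ∧ A.card = B.card ∧ A ∪ B = R ∧
      |∑ v ∈ A, d v - ∑ v ∈ B, d v| ≤ D) (W : Finset V) (F : Finset (V × V)) :
    IsMat (fun x y => |d x - d y| = 1) W F → Disjoint R (supp F) →
    ∃ A B : Finset V, Disjoint A B ∧ A.card = B.card ∧ A ∪ B = R ∪ supp F ∧
      |∑ v ∈ A, d v - ∑ v ∈ B, d v| ≤ max 1 (D - F.card) := by
  induction F using Finset.induction_on with
  | empty =>
    intro _ _
    obtain ⟨A, B, h1, h2, h3, h4⟩ := hR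
    refine ⟨A, B, h1, h2, ?_, ?_⟩
    · rw [h3]; ext x; simp [mem_supp]
    · apply le_max_of_le_right; simpa using h4
  | insert e F he ih =>
    intro hM hdis
    have hsup : supp (insert e F) = insert e.1 (insert e.2 (supp F)) := by
      ext x; simp only [mem_supp, Finset.mem_insert]; grind
    obtain ⟨A, B, h1, h2, h3, h4⟩ := ih
      ⟨fun a ha => hM.1 a (Finset.mem_insert_of_mem ha), fun a ha b hb =>
        hM.2 a (Finset.mem_insert_of_mem ha) b (Finset.mem_insert_of_mem hb)⟩
      (hdis.mono_right (by rw [hsup]; intro x hx; simp [hx]))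
    have hee := hM.1 e (Finset.mem_insert_self _ _)
    have hne : ∀ x, (x = e.1 ∨ x = e.2) → x ∉ A ∪ B := by
      intro x hx hxA
      rw [h3, Finset.mem_union] at hxA
      rcases hxA with hxR | hxF
      · refine Finset.disjoint_left.1 hdis hxR ?_
        rw [hsup]; rcases hx with rfl | rfl <;> simp
      · obtain ⟨e', he', hx'⟩ := (mem_supp _ _).1 hxF
        have := hM.2 e (Finset.mem_insert_self _ _) e' (Finset.mem_insert_of_mem he')
          (by rintro rfl; exact he he')
        rcases hx with rfl | rfl <;> rcases hx' with h | h <;> simp_all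
    obtain ⟨A', B', g1, g2, g3, g4⟩ := split_step d A B h1 h2 e.1 e.2 hee.2.2.1
      (hne _ (Or.inl rfl)) (hne _ (Or.inr rfl))
    refine ⟨A', B', g1, g2, ?_, ?_⟩
    · rw [g3, h3, hsup]; ext x; simp only [Finset.mem_insert, Finset.mem_union]; tauto
    · rw [g4, hee.2.2.2, Finset.card_insert_of_notMem he]
      have := abs_nonneg (∑ v ∈ A, d v - ∑ v ∈ B, d v)
      push_cast
      rw [abs_le]
      rcases le_max_iff.1 h4 with h | h
      · constructor
        · have : (1 : ℤ) ≤ max 1 (D - (F.card + 1)) := le_max_left _ _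
          linarith
        · have : (1 : ℤ) ≤ max 1 (D - (F.card + 1)) := le_max_left _ _
          linarith
      · have i1 : (1 : ℤ) ≤ max 1 (D - (F.card + 1)) := le_max_left _ _
        have i2 : D - (F.card + 1) ≤ max 1 (D - (F.card + 1)) := le_max_right _ _
        constructor <;> linarith

/-- Enough pairs of degree difference one allow an exact split. -/
lemma split_exact {V : Type} [Fintype V] [DecidableEq V] (H : SimpleGraph V) (U : Finset V)
    (hU : Even U.card) (D : ℕ) (hD : ∀ x ∈ U, dg H U x ≤ D) (F : Finset (V × V))
    (hF : IsMat (fun x y => |(dg H U x : ℤ) - dg H U y| = 1) U F) (hc : D ≤ F.card) :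
    ∃ A B : Finset V, Disjoint A B ∧ A.card = B.card ∧ A ∪ B = U ∧
      ∑ x ∈ A, dg H U x = ∑ x ∈ B, dg H U x := by
  have hsub : supp F ⊆ U := by
    intro x hx
    obtain ⟨e, he, h⟩ := (mem_supp _ _).1 hx
    have := hF.1 e he
    rcases h with rfl | rfl
    · exact this.1
    · exact this.2.1
  have hev : Even (supp F).card := by
    have := card_supp hF
    rw [this]; simp
  obtain ⟨n, hn⟩ : ∃ n, (U \ supp F).card = 2 * n := by
    rw [Finset.card_sdiff_of_subset hsub]
    obtain ⟨a, ha⟩ := hU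
    obtain ⟨b, hb⟩ := hev
    exact ⟨a - b, by omega⟩
  have h0 := split_base (fun x => (dg H U x : ℤ)) D (by positivity) n (U \ supp F) hn
    (fun x hx => ⟨by positivity, by exact_mod_cast hD x (Finset.mem_sdiff.1 hx).1⟩)
  obtain ⟨A, B, h1, h2, h3, h4⟩ := split_units _ D _ h0 U F hF Finset.sdiff_disjoint
  rw [Finset.sdiff_union_of_subset hsub] at h3
  refine ⟨A, B, h1, h2, h3, ?_⟩
  have h5 : (D : ℤ) - F.card ≤ 1 := by
    have : (D : ℤ) ≤ F.card := by exact_mod_cast hc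
    linarith
  rw [max_eq_left h5] at h4
  have h6 := sum_dg_self H U
  nth_rw 1 [← h3] at h6
  rw [Finset.sum_union h1] at h6
  rw [abs_le] at h4
  zify at h6 ⊢
  omega

open Classical in
/-- Neighbours of `u` in `W` which are not neighbours of `v` (and differ from `v`). -/
noncomputable def nt {V : Type} (H : SimpleGraph V) (W : Finset V) (u v : V) : Finset V :=
  W.filter (fun w => H.Adj u w ∧ ¬ H.Adj v w ∧ w ≠ v)

lemma mem_nt {V : Type} (H : SimpleGraph V) (W : Finset V) (u v w : V) :
    w ∈ nt H W u v ↔ w ∈ W ∧ H.Adj u w ∧ ¬ H.Adj v w ∧ w ≠ v := by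
  simp [nt]

lemma card_nt_le {V : Type} (H : SimpleGraph V) (W : Finset V) (u v : V) :
    (nt H W u v).card ≤ dg H W u := by
  classical
  apply Finset.card_le_card
  intro w
  rw [mem_nt, Finset.mem_filter]
  tauto

lemma dg_decomp {V : Type} (H : SimpleGraph V) (W : Finset V) (u v : V) (hu : u ∈ W) (hv : v ∈ W) :
    dg H W u + (nt H W v u).card = dg H W v + (nt H W u v).card := by
  classical
  have key : ∀ u v : V, v ∈ W → dg H W u = (W.filter (fun w => H.Adj u w ∧ H.Adj v w)).card +
      (nt H W u v).card + (if H.Adj u v then 1 else 0) := by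
    intro u v hv
    have h1 : (if H.Adj u v then 1 else 0) = (W.filter (fun w => H.Adj u w ∧ w = v)).card := by
      split_ifs with h
      · symm
        rw [Finset.card_eq_one]
        refine ⟨v, ?_⟩
        ext w
        simp only [Finset.mem_filter, Finset.mem_singleton]
        constructor
        · tauto
        · rintro rfl; exact ⟨hv, h, rfl⟩
      · symm
        rw [Finset.card_eq_zero]
        ext w
        simp only [Finset.mem_filter, Finset.notMem_empty, iff_false]
        rintro ⟨-, h', rfl⟩
        exact h h'
    rw [h1]
    unfold nt dg
    rw [← Finset.card_union_of_disjoint, ← Finset.card_union_of_disjoint]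
    · congr 1
      ext w
      simp only [Finset.mem_filter, Finset.mem_union]
      tauto
    · rw [Finset.disjoint_left]
      intro w
      simp only [Finset.mem_filter, Finset.mem_union]
      have := H.loopless.irrefl w
      rintro (h | h) ⟨_, _, rfl⟩
      · exact this h.2.2
      · exact h.2.2.2 rfl
    · rw [Finset.disjoint_left]
      intro w
      simp only [Finset.mem_filter]
      tauto
  rw [key u v hv, key v u hu]
  simp only [H.adj_comm v u, and_comm (a := H.Adj v _)]
  ring

/-- If there are no vertex-disjoint non-twin pairs of equal degree beyond `F`, split by twins. -/
lemma twin_case {V : Type} [Fintype V] [DecidableEq V] (H : SimpleGraph V) (W : Finset V) (D : ℕ)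
    (hD : ∀ x ∈ W, dg H W x ≤ D) (F : Finset (V × V))
    (hmax : ∀ x ∈ W, ∀ y ∈ W, x ∉ supp F → y ∉ supp F → x ≠ y →
      ¬ (dg H W x = dg H W y ∧ (nt H W x y).Nonempty)) :
    ∃ A B : Finset V, Disjoint A B ∧ A.card = B.card ∧
      ∑ x ∈ A, dg H (A ∪ B) x = ∑ x ∈ B, dg H (A ∪ B) x ∧
      W.card ≤ 2 * A.card + 2 * F.card + (D + 1) := by
  obtain ⟨M, hM, hMmax⟩ := exists_maxMat (fun x y => dg H W x = dg H W y) (W \ supp F)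
  have i1 : Set.InjOn Prod.fst (M : Set (V × V)) := by
    intro e he e' he' h
    by_contra hne
    exact (hM.2 e he e' he' hne).1 h
  have i2 : Set.InjOn Prod.snd (M : Set (V × V)) := by
    intro e he e' he' h
    by_contra hne
    exact (hM.2 e he e' he' hne).2.2.2 h
  have hU : M.image Prod.fst ∪ M.image Prod.snd = supp M := by
    ext x
    simp only [mem_supp, Finset.mem_union, Finset.mem_image]
    grind
  refine ⟨M.image Prod.fst, M.image Prod.snd, ?_, ?_, ?_, ?_⟩
  · rw [Finset.disjoint_left]
    intro x hx hx'
    obtain ⟨e, he, rfl⟩ := Finset.mem_image.1 hx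
    obtain ⟨e', he', h⟩ := Finset.mem_image.1 hx'
    by_cases hee : e = e'
    · subst hee; exact (hM.1 e he).2.2.1 h.symm
    · exact (hM.2 e he e' he' hee).2.1 h.symm
  · rw [Finset.card_image_of_injOn i1, Finset.card_image_of_injOn i2]
  · rw [Finset.sum_image i1, Finset.sum_image i2, hU]
    apply Finset.sum_congr rfl
    intro e he
    obtain ⟨a1, a2, a3, a4⟩ := hM.1 e he
    rw [Finset.mem_sdiff] at a1 a2
    have hsub : supp M ⊆ W := by
      intro x hx
      obtain ⟨e, he, h⟩ := (mem_supp _ _).1 hx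
      obtain ⟨a1, a2, -⟩ := hM.1 e he
      rw [Finset.mem_sdiff] at a1 a2
      rcases h with rfl | rfl
      · exact a1.1
      · exact a2.1
    have b : ∀ x y, nt H W x y = ∅ → (nt H (supp M) x y).card = 0 := by
      intro x y h
      rw [Finset.card_eq_zero, Finset.eq_empty_iff_forall_notMem]
      intro w hw
      rw [mem_nt] at hw
      have : w ∈ nt H W x y := (mem_nt _ _ _ _ _).2 ⟨hsub hw.1, hw.2⟩
      rw [h] at this
      simp at this
    have c1 : nt H W e.1 e.2 = ∅ := by
      by_contra h
      exact hmax _ a1.1 _ a2.1 a1.2 a2.2 a3 ⟨a4, Finset.nonempty_iff_ne_empty.2 h⟩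
    have c2 : nt H W e.2 e.1 = ∅ := by
      by_contra h
      exact hmax _ a2.1 _ a1.1 a2.2 a1.2 a3.symm ⟨a4.symm, Finset.nonempty_iff_ne_empty.2 h⟩
    have := dg_decomp H (supp M) e.1 e.2 ((mem_supp _ _).2 ⟨e, he, Or.inl rfl⟩)
      ((mem_supp _ _).2 ⟨e, he, Or.inr rfl⟩)
    rw [b _ _ c1, b _ _ c2] at this
    simpa using this
  · rw [Finset.card_image_of_injOn i1]
    have h1 : ((W \ supp F) \ supp M).card ≤ D + 1 := by
      rw [← Finset.card_range (D + 1)]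
      apply Finset.card_le_card_of_injOn (dg H W)
      · intro x hx
        have hx := (Finset.mem_sdiff.1 (Finset.mem_sdiff.1 hx).1).1
        have := hD x hx
        simp only [Finset.coe_range, Set.mem_Iio]; omega
      · intro x hx y hy h
        by_contra hne
        have hx := Finset.mem_sdiff.1 hx
        have hy := Finset.mem_sdiff.1 hy
        exact hMmax x hx.1 y hy.1 hx.2 hy.2 hne h
    have h2 := card_supp_le F
    have h3 := card_supp_le M
    have h4 := Finset.le_card_sdiff (supp F) W
    have h5 := Finset.le_card_sdiff (supp M) (W \ supp F)
    omega

open Classical in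
lemma count_funs {V : Type} [Fintype V] (k : ℕ) (T Bad : Finset V) (hT : T ⊆ Bad) :
    k * (T.card * (Fintype.card V - Bad.card) ^ (k - 1)) ≤
      ((Finset.univ : Finset (Fin k → V)).filter
        (fun f => ∃ j, f j ∈ T ∧ ∀ l, l ≠ j → f l ∉ Bad)).card := by
  let S : Fin k → Finset (Fin k → V) := fun j =>
    Fintype.piFinset (fun l => if l = j then T else Badᶜ)
  have hS : ∀ j, (S j).card = T.card * (Fintype.card V - Bad.card) ^ (k - 1) := by
    intro j
    simp only [S, Fintype.card_piFinset]
    rw [← Finset.mul_prod_erase Finset.univ _ (Finset.mem_univ j), if_pos rfl]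
    congr 1
    rw [Finset.prod_congr rfl (g := fun _ => Fintype.card V - Bad.card), Finset.prod_const,
      Finset.card_erase_of_mem (Finset.mem_univ j), Finset.card_univ, Fintype.card_fin]
    intro l hl
    rw [if_neg (Finset.ne_of_mem_erase hl), Finset.card_compl]
  have hu : ((Finset.univ : Finset (Fin k)).biUnion S).card =
      k * (T.card * (Fintype.card V - Bad.card) ^ (k - 1)) := by
    rw [Finset.card_biUnion, Finset.sum_congr rfl (fun j _ => hS j), Finset.sum_const,
      Finset.card_univ, Fintype.card_fin, smul_eq_mul]
    intro i _ j _ hij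
    rw [Function.onFun, Finset.disjoint_left]
    intro f hf hf'
    simp only [S, Fintype.mem_piFinset] at hf hf'
    have h1 := hf i
    have h2 := hf' i
    rw [if_pos rfl] at h1
    rw [if_neg hij, Finset.mem_compl] at h2
    exact h2 (hT h1)
  rw [← hu]
  apply Finset.card_le_card
  intro f hf
  rw [Finset.mem_biUnion] at hf
  obtain ⟨j, -, hf⟩ := hf
  simp only [S, Fintype.mem_piFinset] at hf
  rw [Finset.mem_filter]
  refine ⟨Finset.mem_univ _, j, ?_, ?_⟩
  · simpa using hf j
  · intro l hl
    have := hf l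
    rw [if_neg hl] at this
    exact Finset.mem_compl.1 this

/-- Sampling: delete few vertices so that many of the pairs get degree difference one. -/
lemma sampling {V : Type} [Fintype V] [DecidableEq V] [Nonempty V] (H : SimpleGraph V)
    (W : Finset V) (F : Finset (V × V))
    (hF : IsMat (fun x y => dg H W x = dg H W y ∧ (nt H W x y).Nonempty) W F) (s k : ℕ)
    (hs : ∀ e ∈ F, s ≤ (nt H W e.1 e.2).card ∧ (nt H W e.1 e.2).card < 2 * s)
    (hk : 8 * s * k ≤ Fintype.card V) :
    ∃ (Z : Finset V) (F' : Finset (V × V)), Z.card ≤ k ∧ F' ⊆ F ∧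
      (∀ e ∈ F', e.1 ∉ Z ∧ e.2 ∉ Z ∧ dg H (W \ Z) e.1 + 1 = dg H (W \ Z) e.2) ∧
      k * s * F.card ≤ 2 * Fintype.card V * F'.card := by
  classical
  set n := Fintype.card V with hn
  have hn0 : 0 < n := Fintype.card_pos
  let T : V × V → Finset V := fun e => nt H W e.1 e.2
  let Bad : V × V → Finset V := fun e => nt H W e.1 e.2 ∪ nt H W e.2 e.1 ∪ {e.1, e.2}
  let good : (Fin k → V) → V × V → Prop := fun f e =>
    ∃ j, f j ∈ T e ∧ ∀ l, l ≠ j → f l ∉ Bad e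
  have hcount : ∀ e ∈ F, (k * s : ℝ) * n ^ k ≤
      2 * n * ((Finset.univ : Finset (Fin k → V)).filter (fun f => good f e)).card := by
    intro e he
    have h1 := count_funs k (T e) (Bad e) (by intro x hx; simp [Bad, T] at hx ⊢; tauto)
    rw [← hn] at h1
    obtain ⟨b1, b2⟩ := hs e he
    obtain ⟨a1, a2, a3, a4, -⟩ := hF.1 e he
    have h2 : (nt H W e.2 e.1).card = (nt H W e.1 e.2).card := by
      have := dg_decomp H W e.1 e.2 a1 a2
      omega
    have hb : (Bad e).card ≤ 4 * s := by
      have c1 : (Bad e).card ≤ _ := Finset.card_union_le _ _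
      have c2 := Finset.card_union_le (nt H W e.1 e.2) (nt H W e.2 e.1)
      have c3 : ({e.1, e.2} : Finset V).card ≤ 2 := Finset.card_le_two
      omega
    rcases Nat.eq_zero_or_pos k with rfl | hkpos
    · simp only [Nat.cast_zero, zero_mul]; positivity
    have hsn : 8 * s ≤ n := le_trans (Nat.le_mul_of_pos_right _ hkpos) hk
    have hbn : (Bad e).card ≤ n := by omega
    have hnR : (0 : ℝ) < n := by exact_mod_cast hn0
    have hbR : ((Bad e).card : ℝ) ≤ 4 * s := by exact_mod_cast hb
    have hkR : (8 : ℝ) * s * k ≤ n := by exact_mod_cast hk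
    have hk1 : ((k - 1 : ℕ) : ℝ) ≤ k := by exact_mod_cast Nat.sub_le k 1
    have hx : ((Bad e).card : ℝ) / n ≤ 1 := by
      rw [div_le_one hnR]; exact_mod_cast hbn
    have hx0 : 0 ≤ ((Bad e).card : ℝ) / n := by positivity
    have bern := one_add_mul_le_pow (a := -(((Bad e).card : ℝ) / n)) (by linarith) (k - 1)
    have hprod : ((k - 1 : ℕ) : ℝ) * (((Bad e).card : ℝ) / n) ≤ 1 / 2 := by
      rw [mul_div_assoc', div_le_iff₀ hnR]
      have : ((k - 1 : ℕ) : ℝ) * (Bad e).card ≤ k * (4 * s) := by gcongr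
      linarith
    have hhalf : (1 : ℝ) / 2 ≤ (1 + -(((Bad e).card : ℝ) / n)) ^ (k - 1) := by linarith
    have hpow : (n : ℝ) ^ (k - 1) / 2 ≤ ((n : ℝ) - (Bad e).card) ^ (k - 1) := by
      have : (n : ℝ) - (Bad e).card = n * (1 + -(((Bad e).card : ℝ) / n)) := by
        field_simp; ring
      rw [this, mul_pow]
      have : (0 : ℝ) ≤ (n : ℝ) ^ (k - 1) := by positivity
      nlinarith
    have h1R : (k : ℝ) * ((T e).card * ((n : ℝ) - (Bad e).card) ^ (k - 1)) ≤
        ((Finset.univ : Finset (Fin k → V)).filter (fun f => good f e)).card := by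
      have := h1
      rw [← Nat.cast_sub hbn]
      exact_mod_cast this
    have hT : (s : ℝ) ≤ (T e).card := by exact_mod_cast b1
    have h3 : (k : ℝ) * (s * ((n : ℝ) ^ (k - 1) / 2)) ≤
        (k : ℝ) * ((T e).card * ((n : ℝ) - (Bad e).card) ^ (k - 1)) := by gcongr
    have h4 : (n : ℝ) ^ k = n * n ^ (k - 1) := by
      rw [← pow_succ']; congr 1; omega
    rw [h4]
    have h5 := h3.trans h1R
    have h6 := mul_le_mul_of_nonneg_left h5 (by positivity : (0 : ℝ) ≤ 2 * n)
    linarith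
  obtain ⟨f, hf⟩ : ∃ f : Fin k → V, k * s * F.card ≤ 2 * n * (F.filter (good f)).card := by
    by_contra hcon
    push Not at hcon
    have h1 : ∑ e ∈ F, ((Finset.univ : Finset (Fin k → V)).filter (fun f => good f e)).card =
        ∑ f : Fin k → V, (F.filter (good f)).card := by
      simp only [Finset.card_filter]
      rw [Finset.sum_comm]
    have h2 : ∑ f : Fin k → V, 2 * n * (F.filter (good f)).card <
        ∑ f : Fin k → V, k * s * F.card := by
      exact Finset.sum_lt_sum_of_nonempty Finset.univ_nonempty (fun f _ => hcon f)
    rw [← Finset.mul_sum, ← h1, Finset.sum_const, Finset.card_univ, Fintype.card_fun,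
      Fintype.card_fin, ← hn, smul_eq_mul] at h2
    have h3 := Finset.sum_le_sum hcount
    rw [Finset.sum_const, ← Finset.mul_sum, nsmul_eq_mul] at h3
    have h4 : ((2 * n * ∑ e ∈ F,
      ((Finset.univ : Finset (Fin k → V)).filter (fun f => good f e)).card : ℕ) : ℝ) <
        ((n ^ k * (k * s * F.card) : ℕ) : ℝ) := by exact_mod_cast h2
    push_cast at h4
    linarith
  refine ⟨Finset.univ.image f, F.filter (good f), ?_, Finset.filter_subset _ _, ?_, hf⟩
  · exact Finset.card_image_le.trans (by simp)
  · intro e he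
    rw [Finset.mem_filter] at he
    obtain ⟨heF, j, hj, hl⟩ := he
    obtain ⟨a1, a2, a3, a4, -⟩ := hF.1 e heF
    have hjT := (mem_nt _ _ _ _ _).1 hj
    have n1 : e.1 ∉ Finset.univ.image f := by
      intro h
      obtain ⟨l, -, h⟩ := Finset.mem_image.1 h
      by_cases hlj : l = j
      · subst hlj; rw [h] at hjT; exact H.loopless.irrefl _ hjT.2.1
      · exact hl l hlj (by simp [Bad, h])
    have n2 : e.2 ∉ Finset.univ.image f := by
      intro h
      obtain ⟨l, -, h⟩ := Finset.mem_image.1 h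
      by_cases hlj : l = j
      · subst hlj; exact hjT.2.2.2 h
      · exact hl l hlj (by simp [Bad, h])
    refine ⟨n1, n2, ?_⟩
    have d1 := dg_decomp H W e.1 e.2 a1 a2
    have d2 := dg_decomp H (W \ Finset.univ.image f) e.1 e.2 (Finset.mem_sdiff.2 ⟨a1, n1⟩)
      (Finset.mem_sdiff.2 ⟨a2, n2⟩)
    have m1 : nt H (W \ Finset.univ.image f) e.2 e.1 = nt H W e.2 e.1 := by
      ext w
      simp only [mem_nt, Finset.mem_sdiff]
      constructor
      · tauto
      · rintro ⟨w1, w2, w3, w4⟩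
        refine ⟨⟨w1, ?_⟩, w2, w3, w4⟩
        intro h
        obtain ⟨l, -, h⟩ := Finset.mem_image.1 h
        by_cases hlj : l = j
        · subst hlj; rw [h] at hjT; exact hjT.2.2.1 w2
        · refine hl l hlj ?_
          simp only [Bad, Finset.mem_union]
          refine Or.inl (Or.inr ?_)
          rw [h, mem_nt]
          exact ⟨w1, w2, w3, w4⟩
    have m2 : nt H (W \ Finset.univ.image f) e.1 e.2 = (nt H W e.1 e.2).erase (f j) := by
      ext w
      simp only [mem_nt, Finset.mem_sdiff, Finset.mem_erase]
      constructor
      · rintro ⟨⟨w1, w0⟩, w2, w3, w4⟩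
        refine ⟨?_, w1, w2, w3, w4⟩
        rintro rfl
        exact w0 (Finset.mem_image.2 ⟨j, Finset.mem_univ _, rfl⟩)
      · rintro ⟨w0, w1, w2, w3, w4⟩
        refine ⟨⟨w1, ?_⟩, w2, w3, w4⟩
        intro h
        obtain ⟨l, -, h⟩ := Finset.mem_image.1 h
        by_cases hlj : l = j
        · subst hlj; exact w0 h.symm
        · refine hl l hlj ?_
          simp only [Bad, Finset.mem_union]
          refine Or.inl (Or.inl ?_)
          rw [h, mem_nt]
          exact ⟨w1, w2, w3, w4⟩
    have p1 : 0 < (nt H W e.1 e.2).card := Finset.card_pos.2 ⟨_, hj⟩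
    rw [m1, m2, Finset.card_erase_of_mem (show f j ∈ nt H W e.1 e.2 from hj)] at d2
    omega

lemma IsMat.mono {V : Type} {P Q : V → V → Prop} {W U : Finset V} {F F' : Finset (V × V)}
    (hF : IsMat P W F) (hs : F' ⊆ F)
    (h : ∀ e ∈ F', e.1 ∈ U ∧ e.2 ∈ U ∧ Q e.1 e.2) : IsMat Q U F' :=
  ⟨fun e he => ⟨(h e he).1, (h e he).2.1, (hF.1 e (hs he)).2.2.1, (h e he).2.2⟩,
    fun e he e' he' => hF.2 e (hs he) e' (hs he')⟩

lemma core {V : Type} [Fintype V] [DecidableEq V] (H : SimpleGraph V) (W : Finset V) (z : V)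
    (hzW : z ∉ W) (hz : ∀ w ∈ W, ¬ H.Adj z w) (D : ℕ) (hD : ∀ x ∈ W, dg H W x ≤ D) (δ : ℝ)
    (hδ : 0 < δ) (hδ8 : δ ≤ 1 / 8) (h1 : (D : ℝ) ≤ δ * Fintype.card V / 2)
    (h2 : 4 * (D : ℝ) * (Nat.log 2 D + 1 : ℕ) ≤ δ ^ 2 * Fintype.card V) :
    ∃ A B : Finset V, Disjoint A B ∧ A.card = B.card ∧
      ∑ x ∈ A, dg H (A ∪ B) x = ∑ x ∈ B, dg H (A ∪ B) x ∧
      (W.card : ℝ) - 2 * δ * Fintype.card V - D - 1 ≤ 2 * A.card := by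
  classical
  have : Nonempty V := ⟨z⟩
  set n := Fintype.card V with hn
  have hn0 : 0 < n := Fintype.card_pos
  have hnR : (0 : ℝ) < n := by exact_mod_cast hn0
  obtain ⟨F, hF, hmax⟩ :=
    exists_maxMat (fun x y => dg H W x = dg H W y ∧ (nt H W x y).Nonempty) W
  by_cases hFc : (F.card : ℝ) < δ * n
  · obtain ⟨A, B, g1, g2, g3, g4⟩ := twin_case H W D hD F hmax
    refine ⟨A, B, g1, g2, g3, ?_⟩
    have : (W.card : ℝ) ≤ 2 * A.card + 2 * F.card + (D + 1) := by exact_mod_cast g4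
    linarith
  push Not at hFc
  set L := Nat.log 2 D + 1 with hL
  obtain ⟨i, hi, hFi⟩ : ∃ i ∈ Finset.range L, F.card ≤
      L * (F.filter (fun e => Nat.log 2 (nt H W e.1 e.2).card = i)).card := by
    by_contra hcon
    push Not at hcon
    have e1 := Finset.card_eq_sum_card_fiberwise (s := F) (t := Finset.range L)
      (f := fun e => Nat.log 2 (nt H W e.1 e.2).card) (by
        intro e he
        have he' := hF.1 e he
        have := (card_nt_le H W e.1 e.2).trans (hD _ he'.1)
        have := Nat.log_mono_right (b := 2) this
        simp only [Finset.coe_range, Set.mem_Iio]; omega)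
    have e2 := Finset.sum_lt_sum_of_nonempty (s := Finset.range L) ⟨0, by simp [hL]⟩ hcon
    rw [← Finset.mul_sum, ← e1, Finset.sum_const, Finset.card_range, smul_eq_mul] at e2
    omega
  set Fi := F.filter (fun e => Nat.log 2 (nt H W e.1 e.2).card = i) with hFidef
  set s := 2 ^ i with hs
  have hspos : 0 < s := by positivity
  have hsR : (0 : ℝ) < s := by exact_mod_cast hspos
  have hFiM : IsMat (fun x y => dg H W x = dg H W y ∧ (nt H W x y).Nonempty) W Fi :=
    hF.mono (Finset.filter_subset _ _) (fun e he => by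
      have := hF.1 e (Finset.mem_filter.1 he).1
      exact ⟨this.1, this.2.1, this.2.2.2⟩)
  have hsz : ∀ e ∈ Fi, s ≤ (nt H W e.1 e.2).card ∧ (nt H W e.1 e.2).card < 2 * s := by
    intro e he
    rw [Finset.mem_filter] at he
    have hne := (hF.1 e he.1).2.2.2.2
    have hp : (nt H W e.1 e.2).card ≠ 0 := (Finset.card_pos.2 hne).ne'
    refine ⟨?_, ?_⟩
    · rw [hs, ← he.2]; exact Nat.pow_log_le_self 2 hp
    · rw [hs, ← he.2, ← pow_succ']; exact Nat.lt_pow_succ_log_self (by norm_num) _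
  have hLR : (0 : ℝ) < L := by rw [hL]; positivity
  have hFiR : (F.card : ℝ) ≤ L * Fi.card := by exact_mod_cast hFi
  have hFipos : (0 : ℝ) < Fi.card := by
    by_contra h
    have h : (Fi.card : ℝ) = 0 := le_antisymm (not_lt.1 h) (by positivity)
    rw [h] at hFiR
    have : 0 < δ * n := by positivity
    linarith
  have hsD : (s : ℝ) ≤ D := by
    have : 0 < Fi.card := by exact_mod_cast hFipos
    obtain ⟨e, he⟩ := Finset.card_pos.1 this
    have := (hsz e he).1.trans ((card_nt_le H W e.1 e.2).trans (hD _ (hFiM.1 e he).1))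
    exact_mod_cast this
  set k := ⌊δ * n / s⌋₊ with hk
  have hk1 : (k : ℝ) * s ≤ δ * n := by
    have : (k : ℝ) ≤ δ * n / s := Nat.floor_le (by positivity)
    rwa [le_div_iff₀ hsR] at this
  have hk2 : δ * n / 2 ≤ (k : ℝ) * s := by
    have : δ * n / s < (k : ℝ) + 1 := Nat.lt_floor_add_one _
    rw [div_lt_iff₀ hsR] at this
    linarith
  have hk3 : 8 * s * k ≤ n := by
    have : (8 : ℝ) * s * k ≤ n := by nlinarith
    exact_mod_cast this
  obtain ⟨Z, F', z1, z2, z3, z4⟩ := sampling H W Fi hFiM s k hsz hk3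
  have z4R : (k : ℝ) * s * Fi.card ≤ 2 * n * F'.card := by exact_mod_cast z4
  have hF' : (D : ℝ) ≤ F'.card := by
    have q1 : δ * n / 2 * Fi.card ≤ 2 * n * F'.card :=
      (mul_le_mul_of_nonneg_right hk2 hFipos.le).trans z4R
    have q2 : δ / 4 * Fi.card ≤ F'.card := by
      have : n * (δ / 4 * Fi.card) ≤ n * (F'.card : ℝ) := by linarith
      exact le_of_mul_le_mul_left this hnR
    have q3 : δ * n ≤ L * Fi.card := hFc.trans hFiR
    have q4 : (D : ℝ) * L ≤ δ / 4 * Fi.card * L := by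
      have : δ / 4 * (δ * n) ≤ δ / 4 * (L * Fi.card) := by gcongr
      linarith
    exact (le_of_mul_le_mul_right q4 hLR).trans q2
  have hF'N : D ≤ F'.card := by exact_mod_cast hF'
  have hks : (k : ℝ) ≤ δ * n := by
    have : (1 : ℝ) ≤ s := by exact_mod_cast hspos
    have : (k : ℝ) * 1 ≤ k * s := by gcongr
    linarith
  have hU : ∃ U : Finset V, Even U.card ∧ (∀ x ∈ W \ Z, x ∈ U ∧ dg H U x = dg H (W \ Z) x) ∧
      (∀ x ∈ U, dg H U x ≤ D) := by
    have hle : ∀ x, dg H (W \ Z) x ≤ dg H W x := fun x =>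
      Finset.card_le_card (Finset.filter_subset_filter _ Finset.sdiff_subset)
    rcases Nat.even_or_odd (W \ Z).card with h | h
    · refine ⟨W \ Z, h, fun x hx => ⟨hx, rfl⟩, ?_⟩
      intro x hx
      exact (hle x).trans (hD x (Finset.mem_sdiff.1 hx).1)
    · have hz' : z ∉ W \ Z := fun h => hzW (Finset.mem_sdiff.1 h).1
      have key : ∀ x, x ∈ W ∨ x = z → dg H (insert z (W \ Z)) x = dg H (W \ Z) x := by
        intro x hx
        unfold dg
        rw [Finset.filter_insert, if_neg]
        rcases hx with hx | rfl
        · exact fun h => hz x hx h.symm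
        · exact H.loopless.irrefl _
      refine ⟨insert z (W \ Z), ?_, ?_, ?_⟩
      · rw [Finset.card_insert_of_notMem hz']; exact h.add_one
      · intro x hx
        exact ⟨Finset.mem_insert_of_mem hx, key x (Or.inl (Finset.mem_sdiff.1 hx).1)⟩
      · intro x hx
        rcases Finset.mem_insert.1 hx with rfl | hx
        · rw [key x (Or.inr rfl)]
          have : dg H (W \ Z) x = 0 := by
            unfold dg
            rw [Finset.card_eq_zero, Finset.filter_eq_empty_iff]
            intro w hw
            exact hz w (Finset.mem_sdiff.1 hw).1
          omega
        · have hx := (Finset.mem_sdiff.1 hx).1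
          rw [key x (Or.inl hx)]
          exact (hle x).trans (hD x hx)
  obtain ⟨U, u1, u2, u3⟩ := hU
  obtain ⟨A, B, g1, g2, g3, g4⟩ := split_exact H U u1 D u3 F' (hFiM.mono z2 (fun e he => by
    have w := hFiM.1 e (z2 he)
    have y := z3 e he
    have y1 := u2 e.1 (Finset.mem_sdiff.2 ⟨w.1, y.1⟩)
    have y2 := u2 e.2 (Finset.mem_sdiff.2 ⟨w.2.1, y.2.1⟩)
    refine ⟨y1.1, y2.1, ?_⟩
    rw [y1.2, y2.2, ← y.2.2]
    push_cast
    simp)) hF'N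
  refine ⟨A, B, g1, g2, by rw [g3]; exact g4, ?_⟩
  have c1 : U.card = A.card + B.card := by rw [← g3, Finset.card_union_of_disjoint g1]
  have c2 : (W \ Z).card ≤ U.card := Finset.card_le_card (fun x hx => (u2 x hx).1)
  have c3 := Finset.le_card_sdiff Z W
  have c4 : W.card ≤ 2 * A.card + k := by omega
  have c5 : (W.card : ℝ) ≤ 2 * A.card + k := by exact_mod_cast c4
  have : (0 : ℝ) ≤ D := by positivity
  nlinarith

open Asymptotics Filter in
lemma asymp (α δ : ℝ) (hα : 0 < α) (hδ : 0 < δ) (hδ8 : δ ≤ 1 / 8) :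
    ∃ N : ℕ, ∀ n : ℕ, N < n → ∀ D : ℕ, (D : ℝ) ≤ 2 * (n : ℝ) ^ (1 - α) / δ + 1 →
      (D : ℝ) ≤ δ * n / 2 ∧ 4 * (D : ℝ) * (Nat.log 2 D + 1 : ℕ) ≤ δ ^ 2 * n ∧ 2 ≤ δ * n := by
  set a := min α (1 / 2) with ha
  have ha0 : 0 < a := by rw [ha]; positivity
  have ha1 : a ≤ α := min_le_left _ _
  have ha2 : a ≤ 1 / 2 := min_le_right _ _
  have o1 : (fun x : ℝ => Real.log x / Real.log 2 + 1) =o[atTop] (fun x : ℝ => x ^ a) := by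
    refine IsLittleO.add ?_ ?_
    · simp only [div_eq_mul_inv, mul_comm _ (Real.log 2)⁻¹]
      exact (isLittleO_log_rpow_atTop ha0).const_mul_left _
    · rw [isLittleO_const_left]
      right
      exact tendsto_norm_atTop_atTop.comp (tendsto_rpow_atTop ha0)
  have o2 : (fun x : ℝ => 2 * x ^ (1 - α) / δ + 1) =O[atTop] (fun x : ℝ => x ^ (1 - a)) := by
    apply IsBigO.of_bound (2 / δ + 1)
    filter_upwards [eventually_ge_atTop 1] with x hx
    have h1 : x ^ (1 - α) ≤ x ^ (1 - a) := Real.rpow_le_rpow_of_exponent_le hx (by linarith)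
    have h2 : 1 ≤ x ^ (1 - a) := Real.one_le_rpow hx (by linarith)
    have h3 : 0 ≤ x ^ (1 - α) := by positivity
    rw [Real.norm_of_nonneg (by positivity), Real.norm_of_nonneg (by positivity)]
    have : 2 * x ^ (1 - α) / δ = 2 / δ * x ^ (1 - α) := by ring
    rw [this, add_mul]
    gcongr
    linarith
  have o3 := o2.mul_isLittleO o1
  have o4 := (o3.def (show (0 : ℝ) < min (δ ^ 2 / 4) (δ / 2) by positivity))
  have o5 : ∀ᶠ x : ℝ in atTop, (2 * x ^ (1 - α) / δ + 1) * (Real.log x / Real.log 2 + 1) ≤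
      min (δ ^ 2 / 4) (δ / 2) * x := by
    filter_upwards [o4, eventually_ge_atTop 1] with x hx hx1
    rw [← Real.rpow_add (by linarith)] at hx
    have : (1 - a + a) = 1 := by ring
    rw [this, Real.rpow_one, Real.norm_of_nonneg (by linarith : 0 ≤ x)] at hx
    exact (le_abs_self _).trans hx
  have o6 := (tendsto_natCast_atTop_atTop (R := ℝ)).eventually
    (o5.and (eventually_ge_atTop (max 1 (2 / δ))))
  obtain ⟨N, hN⟩ := eventually_atTop.1 o6
  refine ⟨N, fun n hn D hD => ?_⟩
  obtain ⟨h1, h2⟩ := hN n hn.le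
  have n1 : (1 : ℝ) ≤ n := (le_max_left _ _).trans h2
  have n2 : 2 / δ ≤ (n : ℝ) := (le_max_right _ _).trans h2
  have l2 : 0 < Real.log 2 := Real.log_pos (by norm_num)
  have ln : 0 ≤ Real.log n / Real.log 2 := div_nonneg (Real.log_nonneg n1) l2.le
  have hD0 : (0 : ℝ) ≤ D := by positivity
  have h3 : (D : ℝ) * (Real.log n / Real.log 2 + 1) ≤ min (δ ^ 2 / 4) (δ / 2) * n :=
    (mul_le_mul_of_nonneg_right hD (by linarith)).trans h1
  have h4 : min (δ ^ 2 / 4) (δ / 2) * n ≤ δ ^ 2 / 4 * n :=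
    mul_le_mul_of_nonneg_right (min_le_left _ _) (by linarith)
  have h5 : min (δ ^ 2 / 4) (δ / 2) * n ≤ δ / 2 * n :=
    mul_le_mul_of_nonneg_right (min_le_right _ _) (by linarith)
  have h6 : (D : ℝ) ≤ δ / 2 * n := by nlinarith
  have h7 : (D : ℝ) ≤ n := by nlinarith
  have h8 : D ≤ n := by exact_mod_cast h7
  have h9 : ((Nat.log 2 D : ℕ) : ℝ) ≤ Real.log n / Real.log 2 := by
    have e1 : ((Nat.log 2 D : ℕ) : ℝ) ≤ (Nat.log 2 n : ℕ) := by
      exact_mod_cast Nat.log_mono_right h8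
    have e2 := Real.natLog_le_logb n 2
    rw [Real.logb] at e2
    push_cast at e2
    exact e1.trans e2
  refine ⟨by linarith, ?_, ?_⟩
  · push_cast
    have : (D : ℝ) * ((Nat.log 2 D : ℕ) + 1) ≤ D * (Real.log n / Real.log 2 + 1) := by gcongr
    nlinarith
  · rw [div_le_iff₀ hδ] at n2
    linarith


lemma sparse_case (α ε : ℝ) (hα : 0 < α) (hε : 0 < ε) :
    ∃ N : ℕ, ∀ n : ℕ, N < n →
      ∀ (V : Type) [Fintype V] (G H : SimpleGraph V) (a b : ℕ), Fintype.card V = n →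
        (∀ x y, x ≠ y → (H.Adj x y → G.dist x y = a) ∧ (¬ H.Adj x y → G.dist x y = b)) →
        ((∑ v, dg H Finset.univ v : ℕ) : ℝ) ≤ 2 * (n : ℝ) ^ ((2 : ℝ) - α) →
        (n : ℝ) / 2 - ε * n ≤ homNumber G := by
  set δ := min (ε / 3) (1 / 8) with hδdef
  have hδ : 0 < δ := by rw [hδdef]; positivity
  have hδ8 : δ ≤ 1 / 8 := min_le_right _ _
  have hδε : δ ≤ ε / 3 := min_le_left _ _
  obtain ⟨N, hN⟩ := asymp α δ hα hδ hδ8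
  refine ⟨N, fun n hn V _ G H a b hV hd hE => ?_⟩
  classical
  have hn0 : 0 < n := by omega
  have hnR : (0 : ℝ) < n := by exact_mod_cast hn0
  set D := ⌈2 * (n : ℝ) ^ (1 - α) / δ⌉₊ with hDdef
  have hp : 0 < (n : ℝ) ^ (1 - α) := by positivity
  have hD1 : 2 * (n : ℝ) ^ (1 - α) / δ ≤ D := Nat.le_ceil _
  obtain ⟨a1, a2, a3⟩ := hN n hn D (Nat.ceil_lt_add_one (by positivity)).le
  have hD0 : (0 : ℝ) < D := lt_of_lt_of_le (by positivity) hD1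
  set Hi := (Finset.univ : Finset V).filter (fun v => D < dg H Finset.univ v) with hHi
  have c1 : Hi.card * D ≤ ∑ v, dg H Finset.univ v := by
    calc Hi.card * D = ∑ v ∈ Hi, D := by rw [Finset.sum_const, smul_eq_mul]
      _ ≤ ∑ v ∈ Hi, dg H Finset.univ v :=
        Finset.sum_le_sum (fun v hv => (Finset.mem_filter.1 hv).2.le)
      _ ≤ _ := Finset.sum_le_sum_of_subset (Finset.subset_univ _)
  have c2 : (Hi.card : ℝ) ≤ δ * n := by
    have e1 : (Hi.card : ℝ) * D ≤ ((∑ v, dg H Finset.univ v : ℕ) : ℝ) := by exact_mod_cast c1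
    have e2 : (n : ℝ) ^ ((2 : ℝ) - α) = n * (n : ℝ) ^ (1 - α) := by
      have : (2 : ℝ) - α = 1 + (1 - α) := by ring
      rw [this, Real.rpow_add hnR, Real.rpow_one]
    rw [div_le_iff₀ hδ] at hD1
    have e3 : (Hi.card : ℝ) * D ≤ δ * n * D := by
      rw [e2] at hE
      nlinarith
    exact le_of_mul_le_mul_right e3 hD0
  have c3 : Hi.card < Fintype.card V := by
    rw [hV]
    have : (Hi.card : ℝ) < n := by nlinarith
    exact_mod_cast this
  obtain ⟨z, hz⟩ : ∃ z, z ∉ Hi := by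
    by_contra h
    push Not at h
    have : Hi = Finset.univ := Finset.eq_univ_iff_forall.2 h
    rw [this, Finset.card_univ] at c3
    exact lt_irrefl _ c3
  have hzD : dg H Finset.univ z ≤ D := by
    by_contra h
    exact hz (Finset.mem_filter.2 ⟨Finset.mem_univ _, not_le.1 h⟩)
  set W := (Finset.univ : Finset V).filter (fun v => v ∉ Hi ∧ v ≠ z ∧ ¬ H.Adj z v) with hW
  have hWmem : ∀ v, v ∈ W ↔ v ∉ Hi ∧ v ≠ z ∧ ¬ H.Adj z v := by
    intro v; simp [hW]
  have c4 : n ≤ W.card + Hi.card + 1 + D := by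
    have hsub : (Finset.univ : Finset V) ⊆
        ((W ∪ Hi) ∪ {z}) ∪ Finset.univ.filter (fun y => H.Adj z y) := by
      intro v _
      by_cases h1 : v ∈ Hi
      · simp [h1]
      · by_cases h2 : v = z
        · simp [h2]
        · by_cases h3 : H.Adj z v
          · simp [h3]
          · have : v ∈ W := (hWmem v).2 ⟨h1, h2, h3⟩
            simp [this]
    have k1 := Finset.card_le_card hsub
    rw [Finset.card_univ, hV] at k1
    have k2 := Finset.card_union_le ((W ∪ Hi) ∪ {z}) (Finset.univ.filter (fun y => H.Adj z y))
    have k3 := Finset.card_union_le (W ∪ Hi) {z}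
    have k4 := Finset.card_union_le W Hi
    have k5 : (Finset.univ.filter (fun y => H.Adj z y)).card ≤ D := by
      unfold dg at hzD
      convert hzD
    rw [Finset.card_singleton] at k3
    omega
  obtain ⟨A, B, g1, g2, g3, g4⟩ := core H W z (fun h => ((hWmem z).1 h).2.1 rfl)
    (fun w hw => ((hWmem w).1 hw).2.2) D (fun x hx => by
      have h1 := ((hWmem x).1 hx).1
      have h2 : dg H Finset.univ x ≤ D := by
        by_contra h
        exact h1 (Finset.mem_filter.2 ⟨Finset.mem_univ _, not_le.1 h⟩)
      exact le_trans (Finset.card_le_card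
        (Finset.filter_subset_filter _ (Finset.subset_univ _))) h2) δ hδ hδ8
      (by rw [hV]; exact a1) (by rw [hV]; exact a2)
  have hA : A.card ≤ homNumber G := by
    refine le_homNumber_of G H a b ?_ A B g1 g2 (by convert g3)
    intro x y hxy
    split_ifs with h
    · exact (hd x y hxy).1 h
    · exact (hd x y hxy).2 h
  have hAR : (A.card : ℝ) ≤ homNumber G := by exact_mod_cast hA
  have c5 : (n : ℝ) ≤ W.card + Hi.card + 1 + D := by exact_mod_cast c4
  rw [hV] at g4
  have c6 : δ * n ≤ ε / 3 * n := mul_le_mul_of_nonneg_right hδε hnR.le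
  linarith

/-- For every `α > 0` and `ε > 0` there is `N` such that every connected graph on
`n > N` vertices with diameter `2` whose number of edges is at most `n^(2−α)` or at
least `C(n,2) − n^(2−α)` satisfies `h(G) ≥ n/2 − εn`. -/
theorem stmt13 (α ε : ℝ) (hα : 0 < α) (hε : 0 < ε) :
    ∃ N : ℕ, ∀ n : ℕ, N < n →
      ∀ (V : Type) [Fintype V] [DecidableEq V] (G : SimpleGraph V) [DecidableRel G.Adj],
        G.Connected → Fintype.card V = n → G.diam = 2 →
        ((G.edgeFinset.card : ℝ) ≤ (n : ℝ) ^ ((2 : ℝ) - α) ∨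
          (n.choose 2 : ℝ) - (n : ℝ) ^ ((2 : ℝ) - α) ≤ (G.edgeFinset.card : ℝ)) →
        (n : ℝ) / 2 - ε * n ≤ homNumber G := by
  obtain ⟨N, hN⟩ := sparse_case α ε hα hε
  refine ⟨N, fun n hn V _ _ G _ hG hV hdiam hE => ?_⟩
  have hdist : ∀ x y, x ≠ y → ¬ G.Adj x y → G.dist x y = 2 := by
    intro x y hxy hadj
    have h1 : G.dist x y ≤ G.diam := SimpleGraph.dist_le_diam
      (SimpleGraph.ediam_ne_top_of_diam_ne_zero (by rw [hdiam]; norm_num))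
    have h2 : 0 < G.dist x y := hG.pos_dist_of_ne hxy
    have h3 : G.dist x y ≠ 1 := fun h => hadj (SimpleGraph.dist_eq_one_iff_adj.1 h)
    omega
  have hdeg : ∀ v, dg G Finset.univ v = G.degree v := by
    intro v
    classical
    rw [← SimpleGraph.card_neighborFinset_eq_degree, SimpleGraph.neighborFinset_eq_filter]
    unfold dg
    congr!
  have hsum : ∑ v, dg G Finset.univ v = 2 * G.edgeFinset.card := by
    rw [← SimpleGraph.sum_degrees_eq_twice_card_edges]
    exact Finset.sum_congr rfl (fun v _ => hdeg v)
  rcases hE with hE | hE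
  · refine hN n hn V G G 1 2 hV (fun x y hxy =>
      ⟨fun h => SimpleGraph.dist_eq_one_iff_adj.2 h, hdist x y hxy⟩) ?_
    rw [hsum]
    push_cast
    linarith
  · refine hN n hn V G Gᶜ 2 1 hV (fun x y hxy => ⟨fun h => hdist x y hxy ?_, fun h => ?_⟩) ?_
    · exact ((SimpleGraph.compl_adj _ _ _).1 h).2
    · rw [SimpleGraph.compl_adj] at h
      push Not at h
      exact SimpleGraph.dist_eq_one_iff_adj.2 (h hxy)
    · have hc : ∀ v, dg Gᶜ Finset.univ v + dg G Finset.univ v = n - 1 := by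
        intro v
        have e : dg Gᶜ Finset.univ v = Gᶜ.degree v := by
          classical
          rw [← SimpleGraph.card_neighborFinset_eq_degree, SimpleGraph.neighborFinset_eq_filter]
          unfold dg
          congr!
        have := G.degree_compl v
        have h2 := G.degree_lt_card_verts v
        rw [e, hdeg, this, hV]
        rw [hV] at h2
        omega
      have hs : ∑ v, dg Gᶜ Finset.univ v + ∑ v, dg G Finset.univ v = n * (n - 1) := by
        rw [← Finset.sum_add_distrib, Finset.sum_congr rfl (fun v _ => hc v), Finset.sum_const,
          Finset.card_univ, hV, smul_eq_mul]
      have hch : n * (n - 1) = 2 * n.choose 2 := by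
        rw [Nat.choose_two_right, Nat.mul_div_cancel' (Nat.even_mul_pred_self n).two_dvd]
      rw [hsum, hch] at hs
      have hsR : ((∑ v, dg Gᶜ Finset.univ v : ℕ) : ℝ) + 2 * G.edgeFinset.card
          = 2 * n.choose 2 := by exact_mod_cast hs
      linarith
end
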